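/- arXiv:1212.3529 — 5 statements merged into one kernel-verified Lean document; each statement's English description precedes it below -/
import Mathlib

section
/- Let R be a ring. The following are equivalent: (1) R has a left Artinian left quotient ring Q = C⁻¹R; (2) (a) R̄ is a left Goldie ring, (b) n is a nilpotent ideal, (c) there exists a submonoid C'' of C whose image in R̄ equals C̄, (d) for all c ∈ C'' and m ∈ n there exist elements c₁ ∈ C'' and m₁ ∈ n such that c₁m = m₁c, and (e) R satisfies the ascending chain condition on C''-closed left ideals. Moreover, if these hold then C'' is a left Ore set in R, C''⁻¹R = Q, C''⁻¹n is the prime radical of Q and is nilpotent of nilpotency degree ν, and the map Q/C''⁻¹n → Q̄, c⁻¹r + C''⁻¹n ↦ c̄⁻¹r̄ (where c ∈ C'' with c̄ = c + n), is a ring isomorphism. -/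
open Function

universe u v

/-- A regular element of a ring: a two-sided non-zero-divisor. -/
def IsRegElem {R : Type*} [Ring R] (c : R) : Prop :=
  (∀ x : R, c * x = 0 → x = 0) ∧ (∀ x : R, x * c = 0 → x = 0)

/-- The set `C` of regular elements of a ring. -/
def regSet (R : Type*) [Ring R] : Set R := {c : R | IsRegElem c}

/-- A (left) ideal is two-sided. -/
def Ideal.IsTwoSidedNC {R : Type*} [Ring R] (I : Ideal R) : Prop :=
  ∀ a ∈ I, ∀ r : R, a * r ∈ I

/-- A prime (two-sided) ideal of a possibly noncommutative ring. -/
def Ideal.IsPrimeNC {R : Type*} [Ring R] (P : Ideal R) : Prop :=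
  P ≠ ⊤ ∧ P.IsTwoSidedNC ∧ ∀ a b : R, (∀ r : R, a * r * b ∈ P) → a ∈ P ∨ b ∈ P

/-- The prime radical `n` of a ring: the intersection of all prime ideals. -/
def primeRadical (R : Type*) [Ring R] : Ideal R := sInf {P : Ideal R | P.IsPrimeNC}

/-- `n` is a nilpotent ideal. -/
def IsNilpotentIdeal {R : Type*} [Ring R] (I : Ideal R) : Prop := ∃ k : ℕ, I ^ (k + 1) = ⊥

/-- `φ : R →+* Q` realizes `Q` as a left quotient ring `C⁻¹R` of `R`:  `R` embeds in `Q`,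
every regular element of `R` becomes invertible in `Q`, and every element of `Q` has the
form `(φ c)⁻¹ * (φ r)` with `c` regular. -/
structure IsLeftQuotRing {R : Type u} {Q : Type v} [Ring R] [Ring Q] (φ : R →+* Q) : Prop where
  inj : Function.Injective φ
  isUnit : ∀ c : R, IsRegElem c → IsUnit (φ c)
  denom : ∀ q : Q, ∃ c r : R, IsRegElem c ∧ φ c * q = φ r

/-- Data of a left quotient ring of `R`. -/
structure LeftQuotData (R : Type u) [Ring R] : Type (u + 1) where
  Q : Type u
  [instQ : Ring Q]
  φ : R →+* Q
  quot : IsLeftQuotRing φ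

attribute [instance] LeftQuotData.instQ

/-- `R` has a left Artinian left quotient ring `Q = C⁻¹R`. -/
def HasArtinianLeftQuot (R : Type u) [Ring R] : Prop :=
  ∃ d : LeftQuotData R, IsArtinianRing d.Q

/-- A subset of a ring is a left annihilator. -/
def IsLeftAnnihilatorSet {R : Type*} [Ring R] (A : Set R) : Prop :=
  ∃ S : Set R, A = {r : R | ∀ s ∈ S, r * s = 0}

/-- The ascending chain condition on left annihilators. -/
def ACCLeftAnnihilators (R : Type*) [Ring R] : Prop :=
  ∀ f : ℕ → Set R, (∀ i, IsLeftAnnihilatorSet (f i)) → (∀ i j, i ≤ j → f i ⊆ f j) →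
    ∃ N, ∀ k, N ≤ k → f k = f N

/-- The module `M` contains no infinite direct sum of nonzero submodules. -/
def NoInfiniteIndepFamily (R : Type*) (M : Type*) [Ring R] [AddCommGroup M] [Module R M] : Prop :=
  ¬ ∃ f : ℕ → Submodule R M, (∀ i, f i ≠ ⊥) ∧ iSupIndep f

/-- A left Goldie ring: ACC on left annihilators and no infinite direct sums of nonzero
left ideals. -/
def IsLeftGoldie (R : Type*) [Ring R] : Prop :=
  ACCLeftAnnihilators R ∧ NoInfiniteIndepFamily R R

/-- The subquotient `n^i/n^{i+1}` of `R` determined by the prime radical `n`. -/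
abbrev grPiece (R : Type*) [Ring R] (i : ℕ) :=
  ↥(primeRadical R ^ i) ⧸
    (Submodule.comap (primeRadical R ^ i : Ideal R).subtype (primeRadical R ^ (i + 1)))

/-- The class of `x ∈ n^i` in `n^i/n^{i+1}`. -/
def grMk {R : Type*} [Ring R] (i : ℕ) (x : R) (hx : x ∈ primeRadical R ^ i) : grPiece R i :=
  Submodule.Quotient.mk ⟨x, hx⟩

/-- The `C̄`-torsion submodule `τ_i` of `n^i/n^{i+1}` (take the span, which coincides with the
set of torsion elements whenever the latter is a submodule, e.g. when `C̄` is a left Ore set);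
here `C̄` is represented through `π : R → R̄` as `{c : R | IsRegElem (π c)}`. -/
def tauSub {R : Type u} {Rbar : Type v} [Ring R] [Ring Rbar] (π : R →+* Rbar) (i : ℕ) :
    Submodule R (grPiece R i) :=
  Submodule.span R {u : grPiece R i | ∃ c : R, IsRegElem (π c) ∧ c • u = 0}

/-- The `C̄`-torsionfree module `f_i = (n^i/n^{i+1})/τ_i`. -/
abbrev fMod {R : Type u} {Rbar : Type v} [Ring R] [Ring Rbar] (π : R →+* Rbar) (i : ℕ) :=
  grPiece R i ⧸ tauSub π i

/-- The class of `x ∈ n^i` in `f_i`. -/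
def fMk {R : Type u} {Rbar : Type v} [Ring R] [Ring Rbar] (π : R →+* Rbar) (i : ℕ) (x : R)
    (hx : x ∈ primeRadical R ^ i) : fMod π i :=
  Submodule.Quotient.mk (grMk i x hx)

/-- The subset `C⁻¹K = {(φ c)⁻¹ (φ a) : c ∈ C, a ∈ K}` of a left quotient ring. -/
def locSet {R : Type u} {Q : Type v} [Ring R] [Ring Q] (φ : R →+* Q) (K : Ideal R) : Set Q :=
  {q : Q | ∃ c a : R, IsRegElem c ∧ a ∈ K ∧ φ c * q = φ a}

/-- A subset of a ring is a left Ore set (multiplicatively closed and satisfying the left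
Ore condition). -/
def IsLeftOreSubset {A : Type*} [Ring A] (S : Set A) : Prop :=
  (1 : A) ∈ S ∧ (∀ s ∈ S, ∀ t ∈ S, s * t ∈ S) ∧
    ∀ s ∈ S, ∀ a : A, ∃ t ∈ S, ∃ b : A, t * a = b * s

/-- A left denominator set. -/
def IsLeftDenominatorSet {A : Type*} [Ring A] (S : Set A) : Prop :=
  IsLeftOreSubset S ∧ ∀ a : A, ∀ s ∈ S, a * s = 0 → ∃ t ∈ S, t * a = 0


/-- A left ideal `J` of `R` is `S`-closed: `c * r ∈ J` with `c ∈ S` implies `r ∈ J`. -/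
def IsSClosedLeftIdeal {R : Type*} [Ring R] (S : Set R) (J : Ideal R) : Prop :=
  ∀ c ∈ S, ∀ r : R, c * r ∈ J → r ∈ J

section Goldie

variable {A : Type*} [Ring A]

/-- The left annihilator of an element, as a left ideal. -/
def leftAnn (a : A) : Ideal A := LinearMap.ker (LinearMap.toSpanSingleton A A a)

theorem mem_leftAnn {a x : A} : x ∈ leftAnn a ↔ x * a = 0 := by
  simp [leftAnn]

theorem isLeftAnnihilatorSet_leftAnn (a : A) : IsLeftAnnihilatorSet (leftAnn a : Set A) :=
  ⟨{a}, by ext x; simp [mem_leftAnn]⟩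

/-- Among the elements of a nonempty set there is one with maximal left annihilator. -/
theorem ACCLeftAnnihilators.exists_maximal (h : ACCLeftAnnihilators A) {T : Set A}
    (hT : T.Nonempty) : ∃ a ∈ T, ∀ b ∈ T, leftAnn a ≤ leftAnn b → leftAnn b ≤ leftAnn a := by
  have : WellFoundedGT {I : Set A // IsLeftAnnihilatorSet I} := by
    rw [wellFoundedGT_iff_monotone_chain_condition]
    intro f
    obtain ⟨N, hN⟩ := h (fun i => (f i).1) (fun i => (f i).2) (fun i j hij => f.monotone hij)
    exact ⟨N, fun m hm => Subtype.ext (hN m hm).symm⟩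
  let F : A → {I : Set A // IsLeftAnnihilatorSet I} :=
    fun a => ⟨leftAnn a, isLeftAnnihilatorSet_leftAnn a⟩
  obtain ⟨_, ⟨a, ha, rfl⟩, hmin⟩ := this.wf.has_min (F '' T) (hT.image F)
  refine ⟨a, ha, fun b hb hab => ?_⟩
  by_contra hba
  exact hmin (F b) ⟨b, hb, rfl⟩ ⟨hab, hba⟩

theorem ACCLeftAnnihilators.exists_pow (h : ACCLeftAnnihilators A) (a : A) :
    ∃ N, ∀ k, N ≤ k → ∀ x, x * a ^ k = 0 → x * a ^ N = 0 := by
  obtain ⟨N, hN⟩ := h (fun i => leftAnn (a ^ i)) (fun i => isLeftAnnihilatorSet_leftAnn _) (by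
    intro i j hij x hx
    simp only [SetLike.mem_coe, mem_leftAnn] at hx ⊢
    obtain ⟨k, rfl⟩ := Nat.exists_eq_add_of_le hij
    rw [pow_add, ← mul_assoc, hx, zero_mul])
  refine ⟨N, fun k hk x hx => ?_⟩
  have : x ∈ (leftAnn (a ^ k) : Set A) := mem_leftAnn.2 hx
  rw [hN k hk] at this
  exact mem_leftAnn.1 this

/-- A sequence of nonzero submodules, each disjoint from a submodule containing all later ones,
is an infinite direct sum. -/
theorem NoInfiniteIndepFamily.elim {M : Type*} [AddCommGroup M] [Module A M]
    (h : NoInfiniteIndepFamily A M) (f g : ℕ → Submodule A M) (hne : ∀ k, f k ≠ ⊥)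
    (hle : ∀ k i, k < i → f i ≤ g k) (hd : ∀ k, Disjoint (f k) (g k)) : False := by
  refine h ⟨f, hne, ?_⟩
  rw [iSupIndep_iff_finsetSum_eq_zero_imp_eq_zero]
  intro s v hv hsum i
  induction i using Nat.strong_induction_on with
  | _ i ih =>
    intro hi
    have hsum' : v i + ∑ j ∈ s.erase i, v j = 0 := by
      rw [Finset.add_sum_erase s v hi, hsum]
    have hg : ∑ j ∈ s.erase i, v j ∈ g i := by
      refine Submodule.sum_mem _ fun j hj => ?_
      obtain ⟨hji, hjs⟩ := Finset.mem_erase.1 hj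
      rcases lt_or_gt_of_ne hji with hlt | hgt
      · rw [ih j hlt hjs]; exact Submodule.zero_mem _
      · exact hle i j hgt (hv j hjs)
    refine Submodule.disjoint_def.1 (hd i) _ (hv i hi) ?_
    rw [eq_neg_of_add_eq_zero_left hsum']
    exact Submodule.neg_mem _ hg

/-- A ring is semiprime: `aAa = 0` implies `a = 0`. -/
def IsSemiprimeNC (A : Type*) [Ring A] : Prop := ∀ a : A, (∀ r : A, a * r * a = 0) → a = 0

/-- An essential left ideal. -/
def IsEssentialLeft (E : Ideal A) : Prop := ∀ y : A, y ≠ 0 → ∃ r : A, r * y ≠ 0 ∧ r * y ∈ E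

theorem IsEssentialLeft.mono {E F : Ideal A} (hE : IsEssentialLeft E) (h : E ≤ F) :
    IsEssentialLeft F := fun y hy =>
  let ⟨r, h1, h2⟩ := hE y hy
  ⟨r, h1, h h2⟩

/-- The left ideal `{x | x * a ∈ E}`. -/
def leftResidual (E : Ideal A) (a : A) : Ideal A :=
  Submodule.comap (LinearMap.toSpanSingleton A A a) E

theorem mem_leftResidual {E : Ideal A} {a x : A} : x ∈ leftResidual E a ↔ x * a ∈ E := by
  simp [leftResidual]

theorem IsEssentialLeft.leftResidual {E : Ideal A} (hE : IsEssentialLeft E) (a : A) :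
    IsEssentialLeft (_root_.leftResidual E a) := by
  intro y hy
  by_cases h : y * a = 0
  · exact ⟨1, by simpa using hy, by simp [mem_leftResidual, h]⟩
  · obtain ⟨r, h1, h2⟩ := hE _ h
    refine ⟨r, fun h0 => h1 ?_, ?_⟩
    · rw [← mul_assoc, h0, zero_mul]
    · rw [mem_leftResidual, mul_assoc]; exact h2

/-- In a semiprime ring with ACC on left annihilators there are no nonzero nil left ideals. -/
theorem eq_zero_of_nil (hs : IsSemiprimeNC A) (h : ACCLeftAnnihilators A) {b : A}
    (hb : ∀ r : A, IsNilpotent (r * b)) : b = 0 := by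
  by_contra hb0
  let T : Set A := {a | a ≠ 0 ∧ ∀ r : A, IsNilpotent (r * a)}
  obtain ⟨a, ⟨ha0, ha⟩, hmax⟩ := h.exists_maximal (T := T) ⟨b, hb0, hb⟩
  have hmul : ∀ r x : A, IsNilpotent (r * (a * x)) := by
    intro r x
    obtain ⟨n, hn⟩ := ha (x * r)
    refine ⟨n + 1, ?_⟩
    have key : ∀ m : ℕ, (r * (a * x)) ^ (m + 1) = r * a * (x * r * a) ^ m * x := by
      intro m
      induction m with
      | zero => simp [mul_assoc]
      | succ m ih => rw [pow_succ, ih, pow_succ]; simp only [mul_assoc]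
    rw [key, hn, mul_zero, zero_mul]
  refine ha0 (hs a fun x => ?_)
  have hnil : ∃ k, (a * x) ^ k = 0 := by simpa [IsNilpotent] using hmul 1 x
  classical
  have hk := Nat.find_spec hnil
  have hlt : ∀ m, m < Nat.find hnil → (a * x) ^ m ≠ 0 := fun m hm => Nat.find_min hnil hm
  generalize Nat.find hnil = k at hk hlt
  rcases k with _ | _ | k
  · have h10 : (1 : A) = 0 := by simpa using hk
    exact (ha0 (by rw [← one_mul a, h10, zero_mul])).elim
  · simp only [zero_add, pow_one] at hk
    rw [hk, zero_mul]
  · have hne : (a * x) ^ (k + 1) ≠ 0 := hlt _ (by omega)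
    rw [pow_succ', mul_assoc] at hne
    have hle := hmax _ ⟨hne, fun r => hmul r _⟩ (by
      intro y hy
      rw [mem_leftAnn] at hy ⊢
      rw [← mul_assoc, hy, zero_mul])
    have : a * x ∈ leftAnn (a * (x * (a * x) ^ k)) := by
      rw [mem_leftAnn, ← mul_assoc a x, ← pow_succ', ← pow_succ']
      exact hk
    exact mem_leftAnn.1 (hle this)

/-- A semiprime ring with ACC on left annihilators is left nonsingular. -/
theorem eq_zero_of_essential_leftAnn (hs : IsSemiprimeNC A) (h : ACCLeftAnnihilators A) {z : A}
    (hz : IsEssentialLeft (leftAnn z)) : z = 0 := by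
  have nil : ∀ x : A, IsEssentialLeft (leftAnn x) → IsNilpotent x := by
    intro x hx
    obtain ⟨N, hN⟩ := h.exists_pow x
    refine ⟨N, by_contra fun h0 => ?_⟩
    obtain ⟨r, h1, h2⟩ := hx _ h0
    rw [mem_leftAnn, mul_assoc, ← pow_succ] at h2
    exact h1 (hN _ (Nat.le_succ N) _ h2)
  refine eq_zero_of_nil hs h fun r => nil _ ((hz.leftResidual r).mono fun x hx => ?_)
  rw [mem_leftResidual, mem_leftAnn] at hx
  rw [mem_leftAnn, ← mul_assoc, hx]

/-- `Ac` is essential when `c` is right regular and `A` has no infinite direct sums. -/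
theorem isEssentialLeft_span (h : NoInfiniteIndepFamily A A) {c : A}
    (hc : ∀ x : A, x * c = 0 → x = 0) : IsEssentialLeft (Ideal.span {c}) := by
  intro y hy
  by_contra! hcon
  have hpow : ∀ (k : ℕ) (x : A), x * c ^ k = 0 → x = 0 := by
    intro k
    induction k with
    | zero => simp
    | succ k ih =>
      intro x hx
      rw [pow_succ, ← mul_assoc] at hx
      exact ih _ (hc _ hx)
  refine h.elim (fun k => Ideal.span {y * c ^ k}) (fun k => Ideal.span {c ^ (k + 1)}) ?_ ?_ ?_
  · intro k h0
    exact hy (hpow k y (Ideal.span_singleton_eq_bot.1 h0))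
  · intro k i hki
    obtain ⟨j, rfl⟩ := Nat.exists_eq_add_of_le' (Nat.succ_le_of_lt hki)
    rw [Ideal.span_singleton_le_iff_mem, Ideal.mem_span_singleton']
    exact ⟨y * c ^ j, by rw [Nat.succ_eq_add_one, pow_add c j, mul_assoc]⟩
  · intro k
    rw [Submodule.disjoint_def]
    intro z hz hz'
    obtain ⟨a, rfl⟩ := Ideal.mem_span_singleton'.1 hz
    obtain ⟨w, hw⟩ := Ideal.mem_span_singleton'.1 hz'
    have h1 : a * y - w * c = 0 := hpow k _ (by
      rw [sub_mul, mul_assoc, ← hw, pow_succ', mul_assoc, sub_self])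
    have h2 : a * y = 0 := by
      by_contra hne
      exact hcon a hne (Ideal.mem_span_singleton'.2 ⟨w, (sub_eq_zero.1 h1).symm⟩)
    rw [← mul_assoc, h2, zero_mul]

/-- Every nonzero left ideal contains a nonzero element with `l(b) = l(b ^ 2)`. -/
theorem exists_leftAnn_sq (hs : IsSemiprimeNC A) (h : ACCLeftAnnihilators A) {E : Ideal A}
    {e : A} (he : e ∈ E) (he0 : e ≠ 0) :
    ∃ b ∈ E, b ≠ 0 ∧ ∀ x : A, x * b * b = 0 → x * b = 0 := by
  obtain ⟨r, hr⟩ : ∃ r : A, ¬ IsNilpotent (r * e) := by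
    by_contra! hcon
    exact he0 (eq_zero_of_nil hs h hcon)
  obtain ⟨N, hN⟩ := h.exists_pow (r * e)
  refine ⟨(r * e) ^ (N + 1), ?_, fun h0 => hr ⟨_, h0⟩, fun x hx => ?_⟩
  · rw [pow_succ]
    exact E.mul_mem_left _ (E.mul_mem_left _ he)
  · rw [mul_assoc, ← pow_add] at hx
    rw [pow_succ, ← mul_assoc, hN _ (by omega) _ hx, zero_mul]

/-- In a semiprime left Goldie ring every essential left ideal contains a regular element. -/
theorem IsEssentialLeft.exists_regular (hs : IsSemiprimeNC A) (hA : IsLeftGoldie A)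
    {E : Ideal A} (hE : IsEssentialLeft E) : ∃ c ∈ E, IsRegElem c := by
  obtain ⟨h, hfin⟩ := hA
  suffices H : ∃ c ∈ E, ∀ x : A, x * c = 0 → x = 0 by
    obtain ⟨c, hcE, hc⟩ := H
    refine ⟨c, hcE, fun x hx => ?_, hc⟩
    refine eq_zero_of_essential_leftAnn hs h ((isEssentialLeft_span hfin hc).mono ?_)
    rwa [Ideal.span_singleton_le_iff_mem, mem_leftAnn]
  by_contra! hcon
  let P := {c : A // c ∈ E ∧ ∀ x : A, x * c * c = 0 → x * c = 0}
  have step : ∀ c : P, ∃ b ∈ E, b ≠ 0 ∧ b * c.1 = 0 ∧ ∀ x : A, x * b * b = 0 → x * b = 0 := by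
    rintro ⟨c, hcE, hc⟩
    obtain ⟨x, hx, hx0⟩ := hcon c hcE
    obtain ⟨r, hr0, hrE⟩ := hE x hx0
    have hmem : r * x ∈ E ⊓ leftAnn c :=
      ⟨hrE, by rw [SetLike.mem_coe, mem_leftAnn, mul_assoc, hx, mul_zero]⟩
    obtain ⟨b, ⟨hbE, hbc⟩, hb0, hb⟩ := exists_leftAnn_sq hs h hmem hr0
    exact ⟨b, hbE, hb0, mem_leftAnn.1 hbc, hb⟩
  choose b hbE hb0 hbc hbb using step
  have key : ∀ (c : P) (x y : A), x * c.1 + y * b c = 0 → x * c.1 = 0 ∧ y * b c = 0 := by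
    intro c x y hxy
    have h1 : x * c.1 * c.1 = 0 := by
      have := congrArg (· * c.1) hxy
      simpa [add_mul, mul_assoc, hbc] using this
    have h2 := c.2.2 x h1
    rw [h2, zero_add] at hxy
    exact ⟨h2, hxy⟩
  have hsum : ∀ (c : P) (x : A), x * (c.1 + b c) = 0 → x * c.1 = 0 ∧ x * b c = 0 :=
    fun c x hx => key c x x (by rw [← mul_add, hx])
  let nxt : P → P := fun c => ⟨c.1 + b c, E.add_mem c.2.1 (hbE c), fun x hx => by
    have h1 : x * c.1 * c.1 + (x * c.1 + x * b c) * b c = 0 := by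
      simpa [mul_assoc, add_assoc, mul_add, add_mul, hbc] using hx
    obtain ⟨h2, h3⟩ := key c _ _ (by simpa using h1)
    have h4 := c.2.2 x h2
    rw [h4, zero_add] at h3
    rw [mul_add, h4, hbb c x h3, add_zero]⟩
  let s : ℕ → P := fun k => nxt^[k] ⟨0, E.zero_mem, by simp⟩
  have hsucc : ∀ k, (s (k + 1)).1 = (s k).1 + b (s k) := by
    intro k
    simp only [s, Function.iterate_succ_apply']
    rfl
  have hmono : ∀ k j x, x * (s (k + 1 + j)).1 = 0 → x * b (s k) = 0 := by
    intro k j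
    induction j with
    | zero => intro x hx; rw [add_zero, hsucc] at hx; exact (hsum _ _ hx).2
    | succ j ih => intro x hx; rw [← add_assoc, hsucc] at hx; exact ih x (hsum _ _ hx).1
  refine hfin.elim (fun k => Ideal.span {b (s k)}) (fun k => leftAnn (b (s k))) ?_ ?_ ?_
  · intro k h0
    exact hb0 _ (Ideal.span_singleton_eq_bot.1 h0)
  · intro k i hki
    obtain ⟨j, rfl⟩ := Nat.exists_eq_add_of_le (Nat.succ_le_of_lt hki)
    rw [Ideal.span_singleton_le_iff_mem, mem_leftAnn]
    exact hmono k j _ (hbc _)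
  · intro k
    rw [Submodule.disjoint_def]
    intro z hz hz'
    obtain ⟨a, rfl⟩ := Ideal.mem_span_singleton'.1 hz
    exact hbb _ _ (mem_leftAnn.1 hz')

/-- The left Ore condition for the regular elements of a semiprime left Goldie ring. -/
theorem IsLeftGoldie.ore (hs : IsSemiprimeNC A) (hA : IsLeftGoldie A) {c : A}
    (hc : IsRegElem c) (a : A) : ∃ t b : A, IsRegElem t ∧ t * a = b * c := by
  obtain ⟨t, ht, htr⟩ :=
    ((isEssentialLeft_span hA.2 hc.2).leftResidual a).exists_regular hs hA
  obtain ⟨b, hb⟩ := Ideal.mem_span_singleton'.1 (mem_leftResidual.1 ht)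
  exact ⟨t, b, htr, hb.symm⟩

/-- A left ideal together with a maximal left ideal disjoint from it spans an essential left
ideal. -/
theorem exists_disjoint_isEssentialLeft_sup (L : Ideal A) :
    ∃ K : Ideal A, Disjoint L K ∧ IsEssentialLeft (L ⊔ K) := by
  obtain ⟨K, hK⟩ := zorn_le₀ {K : Ideal A | Disjoint L K} (by
    intro S hS hchain
    refine ⟨sSup S, ?_, fun x hx => le_sSup hx⟩
    rcases S.eq_empty_or_nonempty with rfl | hne
    · simp
    · change Disjoint L (sSup S)
      rw [Submodule.disjoint_def]
      intro x hx hx'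
      obtain ⟨J, hJ, hxJ⟩ := (Submodule.mem_sSup_of_directed hne hchain.directedOn).1 hx'
      exact Submodule.disjoint_def.1 (hS hJ) x hx hxJ)
  refine ⟨K, hK.prop, fun y hy => ?_⟩
  by_contra! hcon
  have hyL : ∀ r : A, r * y ∈ L ⊔ K → r * y = 0 := fun r hr => by_contra fun h0 => hcon r h0 hr
  have hd : Disjoint L (K ⊔ Ideal.span {y}) := by
    rw [Submodule.disjoint_def]
    intro x hx hx'
    obtain ⟨k, hk, z, hz, rfl⟩ := Submodule.mem_sup.1 hx'
    obtain ⟨r, rfl⟩ := Ideal.mem_span_singleton'.1 hz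
    have h0 := hyL r (by
      have : k + r * y - k ∈ L ⊔ K :=
        Submodule.sub_mem _ (Submodule.mem_sup_left hx) (Submodule.mem_sup_right hk)
      simpa using this)
    rw [h0, add_zero] at hx ⊢
    exact Submodule.disjoint_def.1 hK.prop k hx hk
  have hyK : y ∈ K := hK.le_of_ge hd le_sup_left
    (Submodule.mem_sup_right (Ideal.mem_span_singleton_self y))
  exact hy (by simpa using hyL 1 (by simpa using Submodule.mem_sup_right hyK))

end Goldie


section Fractions

/-- The regular elements of a ring, as a submonoid. -/
def regSubmonoid (A : Type*) [Ring A] : Submonoid A where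
  carrier := regSet A
  one_mem' := ⟨fun x h => by simpa using h, fun x h => by simpa using h⟩
  mul_mem' := fun {a b} ha hb =>
    ⟨fun x h => hb.1 x (ha.1 _ (by rwa [← mul_assoc])),
      fun x h => ha.2 x (hb.2 _ (by rwa [mul_assoc]))⟩

variable {A B : Type*} [Ring A] [Ring B]

theorem IsRegElem.of_isUnit_map {φ : A →+* B} (hφ : Injective φ) {a : A} (h : IsUnit (φ a)) :
    IsRegElem a := by
  refine ⟨fun x hx => hφ ?_, fun x hx => hφ ?_⟩
  · rw [map_zero]
    exact h.mul_right_eq_zero.1 (by rw [← map_mul, hx, map_zero])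
  · rw [map_zero]
    exact h.mul_left_eq_zero.1 (by rw [← map_mul, hx, map_zero])

/-- `φ` inverts `D`, and every element of `B` has the form `(φ d)⁻¹ * φ a` with `d ∈ D`. -/
structure HasLeftFractions (φ : A →+* B) (D : Submonoid A) : Prop where
  isUnit : ∀ d ∈ D, IsUnit (φ d)
  denom : ∀ b : B, ∃ d ∈ D, ∃ a : A, φ d * b = φ a

theorem IsLeftQuotRing.hasLeftFractions {φ : A →+* B} (h : IsLeftQuotRing φ) :
    HasLeftFractions φ (regSubmonoid A) :=
  ⟨h.isUnit, fun b => let ⟨c, r, hc, e⟩ := h.denom b; ⟨c, hc, r, e⟩⟩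

namespace HasLeftFractions

variable {φ : A →+* B} {D : Submonoid A}

theorem ore (h : HasLeftFractions φ D) (a : A) {d : A} (hd : d ∈ D) :
    ∃ d' ∈ D, ∃ a' : A, φ d' * φ a = φ a' * φ d := by
  obtain ⟨u, hu⟩ := h.isUnit d hd
  obtain ⟨d', hd', a', e⟩ := h.denom (φ a * ↑u⁻¹)
  refine ⟨d', hd', a', ?_⟩
  rw [← e, ← hu, mul_assoc, mul_assoc, Units.inv_mul, mul_one]

/-- The extension `D⁻¹L` of a left ideal `L`. -/
def ext (h : HasLeftFractions φ D) (L : Ideal A) : Ideal B where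
  carrier := {b | ∃ d ∈ D, ∃ a ∈ L, φ d * b = φ a}
  zero_mem' := ⟨1, D.one_mem, 0, L.zero_mem, by simp⟩
  add_mem' := by
    rintro b b' ⟨d, hd, a, ha, e⟩ ⟨d', hd', a', ha', e'⟩
    obtain ⟨s, hs, x, hx⟩ := h.ore d hd'
    refine ⟨s * d, D.mul_mem hs hd, s * a + x * a',
      L.add_mem (L.mul_mem_left _ ha) (L.mul_mem_left _ ha'), ?_⟩
    rw [mul_add, map_mul, mul_assoc, e, hx, mul_assoc, e', map_add, map_mul, map_mul]
  smul_mem' := by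
    rintro c b ⟨d, hd, a, ha, e⟩
    obtain ⟨u, hu⟩ := h.isUnit d hd
    obtain ⟨s, hs, x, hx⟩ := h.denom (c * ↑u⁻¹)
    refine ⟨s, hs, x * a, L.mul_mem_left _ ha, ?_⟩
    rw [map_mul, ← e, ← hx, ← hu, smul_eq_mul, mul_assoc, mul_assoc, Units.inv_mul_cancel_left]

theorem mem_ext (h : HasLeftFractions φ D) {L : Ideal A} {b : B} :
    b ∈ h.ext L ↔ ∃ d ∈ D, ∃ a ∈ L, φ d * b = φ a := Iff.rfl

theorem map_mem_ext (h : HasLeftFractions φ D) {L : Ideal A} {a : A} (ha : a ∈ L) :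
    φ a ∈ h.ext L := ⟨1, D.one_mem, a, ha, by simp⟩

theorem ext_mono (h : HasLeftFractions φ D) {L L' : Ideal A} (hL : L ≤ L') :
    h.ext L ≤ h.ext L' := fun _ ⟨d, hd, a, ha, e⟩ => ⟨d, hd, a, hL ha, e⟩

theorem mem_of_mul_mem (h : HasLeftFractions φ D) {I : Ideal B} {d : A} (hd : d ∈ D) {b : B}
    (hb : φ d * b ∈ I) : b ∈ I := by
  obtain ⟨u, hu⟩ := h.isUnit d hd
  have := I.mul_mem_left (↑u⁻¹ : B) hb
  rwa [← hu, Units.inv_mul_cancel_left] at this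

theorem ext_comap (h : HasLeftFractions φ D) (I : Ideal B) : h.ext (I.comap φ) = I := by
  ext b
  constructor
  · rintro ⟨d, hd, a, ha, e⟩
    exact h.mem_of_mul_mem hd (e ▸ ha)
  · intro hb
    obtain ⟨d, hd, a, e⟩ := h.denom b
    exact ⟨d, hd, a, by rw [Ideal.mem_comap, ← e]; exact I.mul_mem_left _ hb, e⟩

theorem ext_eq_top (h : HasLeftFractions φ D) {L : Ideal A} {d : A} (hd : d ∈ D) (hL : d ∈ L) :
    h.ext L = ⊤ :=
  (Ideal.eq_top_iff_one _).2 ⟨d, hd, d, hL, mul_one _⟩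

theorem isNoetherianRing (h : HasLeftFractions φ D)
    (hacc : ∀ f : ℕ → Ideal A, (∀ i, IsSClosedLeftIdeal (D : Set A) (f i)) →
      (∀ i j, i ≤ j → f i ≤ f j) → ∃ N, ∀ k, N ≤ k → f k = f N) : IsNoetherianRing B := by
  refine monotone_stabilizes_iff_noetherian.1 fun f => ?_
  obtain ⟨N, hN⟩ := hacc (fun i => Ideal.comap φ (f i))
    (fun i c hc r hr => h.mem_of_mul_mem hc (by rwa [Ideal.mem_comap, map_mul] at hr))
    (fun i j hij => Ideal.comap_mono (f.monotone hij))
  refine ⟨N, fun m hm => ?_⟩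
  rw [← h.ext_comap (f N), ← h.ext_comap (f m)]
  exact congrArg h.ext (hN m hm).symm

theorem acc_closed (h : HasLeftFractions φ D) (hφ : Injective φ) [IsNoetherianRing B]
    (f : ℕ → Ideal A) (hf : ∀ i, IsSClosedLeftIdeal (D : Set A) (f i))
    (hmono : ∀ i j, i ≤ j → f i ≤ f j) : ∃ N, ∀ k, N ≤ k → f k = f N := by
  obtain ⟨N, hN⟩ := monotone_stabilizes_iff_noetherian.2 ‹IsNoetherianRing B›
    ⟨fun i => h.ext (f i), fun i j hij => h.ext_mono (hmono i j hij)⟩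
  refine ⟨N, fun k hk => le_antisymm (fun x hx => ?_) (hmono _ _ hk)⟩
  have hx' : φ x ∈ h.ext (f N) := by
    have e : h.ext (f N) = h.ext (f k) := hN k hk
    rw [e]; exact h.map_mem_ext hx
  obtain ⟨d, hd, a, ha, e⟩ := hx'
  refine hf N d hd x ?_
  rwa [hφ ((map_mul φ d x).trans e)]

theorem isUnit_of_isArtinian (h : HasLeftFractions φ D) (hφ : Injective φ) [IsArtinianRing B]
    {a : A} (ha : ∀ x : A, x * a = 0 → x = 0) : IsUnit (φ a) := by
  have hinj : Injective (LinearMap.toSpanSingleton B B (φ a)) := by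
    rw [injective_iff_map_eq_zero]
    intro b hb
    rw [LinearMap.toSpanSingleton_apply, smul_eq_mul] at hb
    obtain ⟨d, hd, x, e⟩ := h.denom b
    have : x = 0 := ha x (hφ (by rw [map_mul, ← e, mul_assoc, hb, mul_zero, map_zero]))
    rw [this, map_zero] at e
    exact (h.isUnit d hd).mul_right_eq_zero.1 e
  obtain ⟨s, hs⟩ := IsArtinian.surjective_of_injective_endomorphism _ hinj 1
  rw [LinearMap.toSpanSingleton_apply, smul_eq_mul] at hs
  exact IsUnit.of_mul_eq_one_right _ hs

theorem isLeftGoldie (h : HasLeftFractions φ D) (hφ : Injective φ) [IsNoetherianRing B] :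
    IsLeftGoldie A := by
  constructor
  · intro f hf hmono
    let r : ℕ → Set A := fun i => {s | ∀ a ∈ f i, a * s = 0}
    let g : ℕ → Ideal B := fun i => ⨅ s ∈ r i, leftAnn (φ s)
    have mem_g : ∀ i b, b ∈ g i ↔ ∀ s ∈ r i, b * φ s = 0 := by
      intro i b
      simp [g, Submodule.mem_iInf, mem_leftAnn]
    have hr : ∀ i j, i ≤ j → r j ⊆ r i := fun i j hij s hs a ha => hs a (hmono i j hij ha)
    have hg : Monotone g := fun i j hij b hb =>
      (mem_g _ _).2 fun s hs => (mem_g _ _).1 hb s (hr i j hij hs)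
    obtain ⟨N, hN⟩ := monotone_stabilizes_iff_noetherian.2 ‹IsNoetherianRing B› ⟨g, hg⟩
    have hfg : ∀ i a, a ∈ f i ↔ φ a ∈ g i := by
      intro i a
      rw [mem_g]
      constructor
      · intro ha s hs
        rw [← map_mul, hs a ha, map_zero]
      · intro H
        obtain ⟨S, hS⟩ := hf i
        rw [hS]
        intro s hs
        refine hφ ?_
        rw [map_mul, map_zero]
        refine H s fun x hx => ?_
        rw [hS] at hx
        exact hx s hs
    refine ⟨N, fun k hk => ?_⟩
    ext a
    have e : g N = g k := hN k hk
    rw [hfg, hfg, e]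
  · rintro ⟨f, hne, hind⟩
    let p : ℕ → Ideal A := fun k => ⨆ i ∈ Set.Iic k, f i
    have hp : ∀ i j, i ≤ j → p i ≤ p j := fun i j hij =>
      biSup_mono fun _ hx => le_trans hx hij
    obtain ⟨N, hN⟩ := monotone_stabilizes_iff_noetherian.2 ‹IsNoetherianRing B›
      ⟨fun i => h.ext (p i), fun i j hij => h.ext_mono (hp i j hij)⟩
    obtain ⟨a, ha, ha0⟩ := (Submodule.ne_bot_iff _).1 (hne (N + 1))
    have hmem : φ a ∈ h.ext (p N) := by
      have e : h.ext (p N) = h.ext (p (N + 1)) := hN (N + 1) (Nat.le_succ N)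
      rw [e]
      exact h.map_mem_ext (Submodule.mem_iSup_of_mem (N + 1)
        (Submodule.mem_iSup_of_mem (le_refl (N + 1)) ha))
    obtain ⟨d, hd, x, hx, e⟩ := hmem
    rw [← map_mul] at e
    have hda : d * a ∈ p N := by rwa [hφ e]
    have hle : p N ≤ ⨆ j ≠ N + 1, f j :=
      biSup_mono fun i (hi : i ≤ N) => by omega
    have h0 : d * a = 0 := Submodule.disjoint_def.1 (hind (N + 1)) _
      (Ideal.mul_mem_left _ _ ha) (hle hda)
    exact ha0 ((IsRegElem.of_isUnit_map hφ (h.isUnit d hd)).1 a h0)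

theorem isSemisimpleRing {φ : A →+* B} (h : HasLeftFractions φ (regSubmonoid A))
    (hs : IsSemiprimeNC A) (hA : IsLeftGoldie A) : IsSemisimpleRing B := by
  refine (isSemisimpleModule_iff B B).2 ⟨fun L => ?_⟩
  let L₀ : Ideal A := Ideal.comap φ L
  obtain ⟨K, hd, hE⟩ := exists_disjoint_isEssentialLeft_sup L₀
  obtain ⟨c, hcE, hc⟩ := hE.exists_regular hs hA
  refine ⟨h.ext K, ?_, ?_⟩
  · rw [Submodule.disjoint_def]
    rintro b hb ⟨d, hd', a, ha, e⟩
    have haL : a ∈ L₀ := by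
      change φ a ∈ L
      rw [← e]; exact L.smul_mem _ hb
    rw [Submodule.disjoint_def.1 hd a haL ha, map_zero] at e
    exact (h.isUnit d hd').mul_right_eq_zero.1 e
  · rw [codisjoint_iff, Ideal.eq_top_iff_one]
    obtain ⟨x, hx, y, hy, hxy⟩ := Submodule.mem_sup.1 hcE
    refine h.mem_of_mul_mem (I := L ⊔ h.ext K) (d := c) hc ?_
    rw [mul_one, ← hxy, map_add]
    exact Submodule.add_mem_sup hx (h.map_mem_ext hy)

/-- In an Artinian ring of left fractions, a left ideal stable under right multiplication by the
base ring is two-sided. -/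
theorem isTwoSided_of_stable (h : HasLeftFractions φ D) [IsArtinianRing B] {I : Ideal B}
    (hI : ∀ x ∈ I, ∀ a : A, x * φ a ∈ I) : I.IsTwoSided := by
  refine ⟨fun {x} b hx => ?_⟩
  obtain ⟨d, hd, a, e⟩ := h.denom b
  obtain ⟨u, hu⟩ := h.isUnit d hd
  suffices H : x * ↑u⁻¹ ∈ I by
    have := hI _ H a
    rwa [← e, ← hu, mul_assoc, Units.inv_mul_cancel_left] at this
  let g : ℕ → Ideal B := fun k =>
    Submodule.comap (LinearMap.toSpanSingleton B B (↑(u ^ k)⁻¹ : B)) I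
  have mem_g : ∀ k y, y ∈ g k ↔ y * ↑(u ^ k)⁻¹ ∈ I := fun k y => by
    rw [Submodule.mem_comap, LinearMap.toSpanSingleton_apply, smul_eq_mul]
  have hg : Antitone g := antitone_nat_of_succ_le fun k y hy => by
    rw [mem_g] at hy ⊢
    have := hI _ hy d
    rwa [pow_succ', mul_inv_rev, Units.val_mul, ← hu, mul_assoc, mul_assoc, Units.inv_mul,
      mul_one] at this
  obtain ⟨N, hN⟩ := IsArtinian.monotone_stabilizes (R := B) (M := B) ⟨g, hg⟩
  have e : g N = g (N + 1) := hN (N + 1) (Nat.le_succ N)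
  have hx' : x * ↑(u ^ N) ∈ g (N + 1) := by
    rw [← e, mem_g, mul_assoc, Units.mul_inv, mul_one]
    exact hx
  rwa [mem_g, pow_succ', mul_inv_rev, Units.val_mul, mul_assoc, Units.mul_inv_cancel_left] at hx'

/-- The extension of a two-sided ideal satisfying the left Ore condition for `D` is two-sided. -/
theorem ext_isTwoSided (h : HasLeftFractions φ D) {L : Ideal A} [L.IsTwoSided]
    (hL : ∀ c ∈ D, ∀ m ∈ L, ∃ c₁ ∈ D, ∃ m₁ ∈ L, c₁ * m = m₁ * c) : (h.ext L).IsTwoSided := by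
  refine ⟨fun {x} b hx => ?_⟩
  obtain ⟨s, hs, m, hm, e⟩ := hx
  obtain ⟨t, ht, r, e'⟩ := h.denom b
  obtain ⟨c, hc, m₁, hm₁, hcm⟩ := hL t ht m hm
  refine ⟨c * s, D.mul_mem hc hs, m₁ * r, Ideal.mul_mem_right _ _ hm₁, ?_⟩
  calc φ (c * s) * (x * b) = φ c * (φ s * x) * b := by simp only [map_mul, mul_assoc]
    _ = φ (c * m) * b := by rw [e, map_mul]
    _ = φ m₁ * (φ t * b) := by rw [hcm, map_mul, mul_assoc]
    _ = φ (m₁ * r) := by rw [e', map_mul]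

theorem ext_pow_le (h : HasLeftFractions φ D) {L : Ideal A} (hL : (h.ext L).IsTwoSided) (k : ℕ) :
    h.ext L ^ k ≤ h.ext (L ^ k) := by
  rcases k with _ | k
  · rw [Submodule.pow_zero, Submodule.pow_zero, Ideal.one_eq_top, Ideal.one_eq_top,
      h.ext_eq_top D.one_mem Submodule.mem_top]
  induction k with
  | zero => rw [zero_add, Submodule.pow_one, Submodule.pow_one]
  | succ k ih =>
    rw [Submodule.pow_succ' _ (Nat.succ_ne_zero k), Submodule.pow_succ' _ (Nat.succ_ne_zero k)]
    refine Ideal.mul_le.2 fun x hx y hy => ?_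
    obtain ⟨t, ht, m, hm, e⟩ := ih hy
    obtain ⟨u, hu⟩ := h.isUnit t ht
    obtain ⟨s, hs, a, ha, e'⟩ := hL.mul_mem_of_left (↑u⁻¹ : B) hx
    refine ⟨s, hs, a * m, Ideal.mul_mem_mul ha hm, ?_⟩
    rw [map_mul, ← e, ← e', ← hu, mul_assoc, mul_assoc, Units.inv_mul_cancel_left]

end HasLeftFractions
end Fractions

section PrimeRadical

variable {R : Type*} [Ring R]

theorem mem_primeRadical {a : R} :
    a ∈ primeRadical R ↔ ∀ P : Ideal R, P.IsPrimeNC → a ∈ P := by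
  simp [primeRadical, Submodule.mem_sInf]

instance primeRadical_isTwoSided : (primeRadical R).IsTwoSided :=
  ⟨fun {a} b ha => mem_primeRadical.2 fun P hP => hP.2.1 a (mem_primeRadical.1 ha P hP) b⟩

theorem mem_primeRadical_of_forall {a : R} (h : ∀ r, a * r * a ∈ primeRadical R) :
    a ∈ primeRadical R :=
  mem_primeRadical.2 fun P hP =>
    or_self_iff.1 (hP.2.2 a a fun r => mem_primeRadical.1 (h r) P hP)

theorem isSemiprimeNC_of_ker_eq {S : Type*} [Ring S] {π : R →+* S} (hπ : Surjective π)
    (hker : RingHom.ker π = primeRadical R) : IsSemiprimeNC S := by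
  intro x hx
  obtain ⟨a, rfl⟩ := hπ x
  rw [← RingHom.mem_ker, hker]
  refine mem_primeRadical_of_forall fun r => ?_
  rw [← hker, RingHom.mem_ker, map_mul, map_mul]
  exact hx _

theorem Ideal.IsPrimeNC.le_of_pow_le {P I : Ideal R} (hP : P.IsPrimeNC) {k : ℕ}
    (h : I ^ k ≤ P) : I ≤ P := by
  induction k with
  | zero =>
    rw [Submodule.pow_zero, Ideal.one_eq_top, top_le_iff] at h
    exact (hP.1 h).elim
  | succ k ih =>
    by_contra hI
    obtain ⟨a, haI, haP⟩ := SetLike.not_le_iff_exists.1 hI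
    refine hI (ih fun b hb => (hP.2.2 b a fun r => ?_).resolve_right haP)
    rw [mul_assoc]
    refine h ?_
    rw [Submodule.pow_succ]
    exact Ideal.mul_mem_mul hb (I.mul_mem_left _ haI)

theorem le_primeRadical_of_pow_eq_bot {I : Ideal R} {k : ℕ} (h : I ^ k = ⊥) :
    I ≤ primeRadical R := fun _ ha =>
  mem_primeRadical.2 fun _ hP => hP.le_of_pow_le (k := k) (h ▸ bot_le) ha

theorem primeRadical_le_jacobson : primeRadical R ≤ Ring.jacobson R := by
  rw [Ring.jacobson_eq_sInf_isMaximal]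
  refine le_sInf fun M hM a ha => ?_
  have hM : M.IsMaximal := hM
  let P : Ideal R := ⨅ r : R, leftResidual M r
  have mem_P : ∀ x, x ∈ P ↔ ∀ r, x * r ∈ M := fun x => by
    simp [P, Submodule.mem_iInf, mem_leftResidual]
  have hP : P.IsPrimeNC := by
    refine ⟨fun h => hM.ne_top ?_, fun x hx r => ?_, fun x y hxy => ?_⟩
    · rw [Ideal.eq_top_iff_one] at h ⊢
      simpa using (mem_P 1).1 h 1
    · rw [mem_P] at hx ⊢
      intro s
      rw [mul_assoc]
      exact hx _
    · by_contra! hcon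
      obtain ⟨s, hs⟩ : ∃ s, y * s ∉ M := by simpa [mem_P] using hcon.2
      obtain ⟨t, m, hm, hone⟩ := hM.exists_inv hs
      refine hcon.1 ((mem_P x).2 fun r => ?_)
      have e : x * r = x * (r * t) * y * s + x * r * m := by
        calc x * r = x * r * (t * (y * s) + m) := by rw [hone, mul_one]
          _ = _ := by rw [mul_add]; simp only [mul_assoc]
      rw [e]
      exact M.add_mem ((mem_P _).1 (hxy _) s) (M.mul_mem_left _ hm)
  simpa using (mem_P a).1 (mem_primeRadical.1 ha P hP) 1

theorem isNilpotentIdeal_primeRadical [IsArtinianRing R] : IsNilpotentIdeal (primeRadical R) := by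
  obtain ⟨k, hk⟩ := IsSemiprimaryRing.isNilpotent (R := R)
  refine ⟨k, le_bot_iff.1 ?_⟩
  calc primeRadical R ^ (k + 1) ≤ Ring.jacobson R ^ (k + 1) :=
        Ideal.pow_right_mono primeRadical_le_jacobson _
    _ = Ring.jacobson R ^ k * Ring.jacobson R := Submodule.pow_succ _
    _ ≤ ⊥ := by rw [hk]; exact Submodule.bot_mul _ |>.le

theorem comap_pow_le {S : Type*} [Ring S] (φ : R →+* S) (I : Ideal S) (k : ℕ) :
    Ideal.comap φ I ^ k ≤ Ideal.comap φ (I ^ k) := by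
  induction k with
  | zero =>
    rw [Submodule.pow_zero, Submodule.pow_zero, Ideal.one_eq_top, Ideal.one_eq_top,
      Ideal.comap_top]
  | succ k ih =>
    rw [Submodule.pow_succ, Submodule.pow_succ]
    refine Ideal.mul_le.2 fun r hr s hs => ?_
    rw [Ideal.mem_comap, map_mul]
    exact Ideal.mul_mem_mul (ih hr) hs

theorem isUnit_of_isUnit_map {S : Type*} [Ring S] [IsArtinianRing R] {χ : R →+* S}
    (hχ : Surjective χ) (hker : RingHom.ker χ = primeRadical R) {a : R} (ha : IsUnit (χ a)) :
    IsUnit a := by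
  obtain ⟨u, hu⟩ := ha
  obtain ⟨b, hb⟩ := hχ ↑u⁻¹
  have hmem : 1 - a * b ∈ primeRadical R := by
    rw [← hker, RingHom.mem_ker, map_sub, map_one, map_mul, hb, ← hu, Units.mul_inv, sub_self]
  obtain ⟨k, hk⟩ := isNilpotentIdeal_primeRadical (R := R)
  have hnil : IsNilpotent (1 - a * b) := by
    refine ⟨k + 1, ?_⟩
    have := Ideal.pow_mem_pow hmem (k + 1)
    rwa [hk] at this
  obtain ⟨v, hv⟩ : IsUnit (a * b) := by simpa using hnil.isUnit_one_sub
  refine IsUnit.of_mul_eq_one (b * ↑v⁻¹) ?_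
  rw [← mul_assoc, ← hv, Units.mul_inv]

end PrimeRadical

namespace HasLeftFractions

variable {A B : Type*} [Ring A] [Ring B] {φ : A →+* B} {D : Submonoid A}

theorem isPrimeNC_comap (h : HasLeftFractions φ D) [IsArtinianRing B] {P : Ideal B}
    (hP : P.IsPrimeNC) : (Ideal.comap φ P).IsPrimeNC := by
  refine ⟨fun H => hP.1 ?_, fun a ha r => ?_, fun a b hab => ?_⟩
  · rw [Ideal.eq_top_iff_one] at H ⊢
    rwa [Ideal.mem_comap, map_one] at H
  · rw [Ideal.mem_comap, map_mul]
    exact hP.2.1 _ ha _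
  · let J : Ideal B := ⨅ r : A, leftResidual P (φ r * φ b)
    have mem_J : ∀ y, y ∈ J ↔ ∀ r, y * (φ r * φ b) ∈ P := fun y => by
      simp [J, Submodule.mem_iInf, mem_leftResidual]
    have hJ : J.IsTwoSided := h.isTwoSided_of_stable fun x hx a => (mem_J _).2 fun r => by
      have := (mem_J x).1 hx (a * r)
      rwa [map_mul, mul_assoc, ← mul_assoc x] at this
    have haJ : φ a ∈ J := (mem_J _).2 fun r => by
      have := hab r
      rwa [Ideal.mem_comap, map_mul, map_mul, mul_assoc] at this
    refine hP.2.2 (φ a) (φ b) fun q => ?_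
    have := (mem_J _).1 (hJ.mul_mem_of_left q haJ) 1
    rwa [map_one, one_mul] at this

theorem comap_primeRadical (h : HasLeftFractions φ D) (hφ : Injective φ) [IsArtinianRing B] :
    Ideal.comap φ (primeRadical B) = primeRadical A := by
  refine le_antisymm ?_ fun a ha => ?_
  · obtain ⟨k, hk⟩ := isNilpotentIdeal_primeRadical (R := B)
    refine le_primeRadical_of_pow_eq_bot (k := k + 1) (le_bot_iff.1 ?_)
    refine (comap_pow_le φ _ _).trans ?_
    rw [hk]
    exact (Ideal.comap_bot_of_injective φ hφ).le
  · exact mem_primeRadical.2 fun P hP => mem_primeRadical.1 ha _ (h.isPrimeNC_comap hP)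

theorem ext_primeRadical (h : HasLeftFractions φ D) (hφ : Injective φ) [IsArtinianRing B] :
    h.ext (primeRadical A) = primeRadical B := by
  rw [← h.comap_primeRadical hφ, h.ext_comap]

theorem primeRadical_pow_eq_bot_iff (h : HasLeftFractions φ D) (hφ : Injective φ)
    [IsArtinianRing B] (k : ℕ) : primeRadical B ^ k = ⊥ ↔ primeRadical A ^ k = ⊥ := by
  constructor
  · intro hk
    refine le_bot_iff.1 ?_
    rw [← h.comap_primeRadical hφ]
    refine (comap_pow_le φ _ _).trans ?_
    rw [hk]
    exact (Ideal.comap_bot_of_injective φ hφ).le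
  · intro hk
    have key := h.ext_pow_le (L := primeRadical A)
      (by rw [h.ext_primeRadical hφ]; infer_instance) k
    rw [h.ext_primeRadical hφ, hk] at key
    refine le_bot_iff.1 (key.trans ?_)
    rintro b ⟨d, hd, a, ha, e⟩
    rw [Submodule.mem_bot] at ha
    rw [ha, map_zero] at e
    exact (h.isUnit d hd).mul_right_eq_zero.1 e

theorem isNilpotentIdeal (h : HasLeftFractions φ D) (hφ : Injective φ) [IsArtinianRing B] :
    IsNilpotentIdeal (primeRadical A) :=
  let ⟨k, hk⟩ := isNilpotentIdeal_primeRadical (R := B)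
  ⟨k, (h.primeRadical_pow_eq_bot_iff hφ _).1 hk⟩

theorem exists_mul_eq_of_mem_primeRadical (h : HasLeftFractions φ D) (hφ : Injective φ)
    [IsArtinianRing B] {c m : A} (hc : c ∈ D) (hm : m ∈ primeRadical A) :
    ∃ c₁ ∈ D, ∃ m₁ ∈ primeRadical A, c₁ * m = m₁ * c := by
  obtain ⟨c₁, hc₁, m₁, e⟩ := h.ore m hc
  refine ⟨c₁, hc₁, m₁, ?_, hφ (by simpa using e)⟩
  obtain ⟨u, hu⟩ := h.isUnit c hc
  rw [← h.comap_primeRadical hφ, Ideal.mem_comap] at hm ⊢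
  have := Ideal.mul_mem_right (↑u⁻¹ : B) _ (Ideal.mul_mem_left _ (φ c₁) hm)
  rwa [e, ← hu, Units.mul_inv_cancel_right] at this

/-- Rings of left fractions pass to compatible quotients. -/
theorem exists_quotient {A' B' : Type*} [Ring A'] [Ring B'] (h : HasLeftFractions φ D)
    {π : A →+* A'} (hπ : Surjective π) {χ : B →+* B'} (hχ : Surjective χ)
    (hker : RingHom.ker π = Ideal.comap φ (RingHom.ker χ)) :
    ∃ ψ : A' →+* B', Injective ψ ∧ ψ.comp π = χ.comp φ ∧ HasLeftFractions ψ (D.map π) := by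
  have hle : RingHom.ker π ≤ RingHom.ker (χ.comp φ) := by
    rw [hker]; exact fun a ha => ha
  let ψ : A' →+* B' := RingHom.liftOfSurjective π hπ ⟨χ.comp φ, hle⟩
  have hψ : ψ.comp π = χ.comp φ := RingHom.liftOfRightInverse_comp _ _ _ _
  have hψ' : ∀ a, ψ (π a) = χ (φ a) := fun a => RingHom.congr_fun hψ a
  refine ⟨ψ, (injective_iff_map_eq_zero ψ).2 fun x hx => ?_, hψ, ?_, ?_⟩
  · obtain ⟨a, rfl⟩ := hπ x
    rw [← RingHom.mem_ker, hker]
    rwa [hψ'] at hx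
  · rintro _ ⟨d, hd, rfl⟩
    have := (h.isUnit d hd).map χ
    rwa [← hψ'] at this
  · intro y
    obtain ⟨b, rfl⟩ := hχ y
    obtain ⟨d, hd, a, e⟩ := h.denom b
    exact ⟨π d, ⟨d, hd, rfl⟩, π a, by rw [hψ', hψ', ← e, map_mul]⟩

end HasLeftFractions

section Criterion

/-- For an Artinian ring `B` of left fractions of `A`, the residue ring of `B` by its prime radical
is a ring of left fractions of the residue ring of `A` by its prime radical. -/
theorem HasLeftFractions.exists_residue {A A' B : Type*} [Ring A] [Ring A'] [Ring B] {φ : A →+* B}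
    {D : Submonoid A} (h : HasLeftFractions φ D) (hφ : Injective φ) [IsArtinianRing B]
    {π : A →+* A'} (hπ : Surjective π) (hker : RingHom.ker π = primeRadical A) :
    ∃ ψ : A' →+* B ⧸ primeRadical B, Injective ψ ∧
      ψ.comp π = (Ideal.Quotient.mk (primeRadical B)).comp φ ∧ HasLeftFractions ψ (D.map π) :=
  h.exists_quotient hπ Ideal.Quotient.mk_surjective
    (by rw [Ideal.mk_ker, h.comap_primeRadical hφ, hker])

/-- When the left quotient ring is Artinian, an element is regular if and only if it is regular
modulo the prime radical. -/
theorem HasLeftFractions.isRegElem_map_iff {A A' B : Type*} [Ring A] [Ring A'] [Ring B]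
    {φ : A →+* B} (h : HasLeftFractions φ (regSubmonoid A)) (hφ : Injective φ) [IsArtinianRing B]
    {π : A →+* A'} (hπ : Surjective π) (hker : RingHom.ker π = primeRadical A) (a : A) :
    IsRegElem (π a) ↔ IsRegElem a := by
  obtain ⟨ψ, hψ, hcomp, hfrac⟩ := h.exists_residue hφ hπ hker
  have hcomp' : ψ (π a) = Ideal.Quotient.mk (primeRadical B) (φ a) := RingHom.congr_fun hcomp a
  have : IsArtinianRing (B ⧸ primeRadical B) :=
    Ideal.Quotient.mk_surjective.isArtinianRing (f := Ideal.Quotient.mk (primeRadical B))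
  constructor
  · intro ha
    have hu := hfrac.isUnit_of_isArtinian hψ ha.2
    rw [hcomp'] at hu
    exact IsRegElem.of_isUnit_map hφ
      (isUnit_of_isUnit_map Ideal.Quotient.mk_surjective Ideal.mk_ker hu)
  · exact fun ha => IsRegElem.of_isUnit_map hψ (hfrac.isUnit _ ⟨a, ha, rfl⟩)

/-- The left Ore condition, lifted modulo an ideal. -/
theorem exists_mul_eq_mul_of_map {A A' : Type*} [Ring A] [Ring A'] {π : A →+* A'}
    (hπ : Surjective π) (hs : IsSemiprimeNC A') (hA : IsLeftGoldie A') {D : Submonoid A}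
    (himg : π '' (D : Set A) = {x | IsRegElem x})
    (hD : ∀ c ∈ D, ∀ m ∈ RingHom.ker π, ∃ c₁ ∈ D, ∃ m₁ ∈ RingHom.ker π, c₁ * m = m₁ * c)
    {s : A} (hsD : s ∈ D) (a : A) : ∃ t ∈ D, ∃ b, t * a = b * s := by
  have hreg : IsRegElem (π s) := by
    have : π s ∈ π '' (D : Set A) := ⟨s, hsD, rfl⟩
    rwa [himg] at this
  obtain ⟨t', b', ht', e⟩ := hA.ore hs hreg (π a)
  obtain ⟨t, ht, rfl⟩ : t' ∈ π '' (D : Set A) := by rw [himg]; exact ht'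
  obtain ⟨b, rfl⟩ := hπ b'
  obtain ⟨c, hc, m, -, hcm⟩ := hD s hsD (t * a - b * s)
    (by rw [RingHom.mem_ker, map_sub, map_mul, map_mul, e, sub_self])
  refine ⟨c * t, D.mul_mem hc ht, c * b + m, ?_⟩
  rw [add_mul, ← hcm]
  noncomm_ring

/-- A left Ore set of regular elements admits a ring of left fractions. -/
theorem exists_hasLeftFractions {A : Type u} [Ring A] {D : Submonoid A}
    (hD : (D : Set A) ⊆ regSet A) (hore : ∀ s ∈ D, ∀ a : A, ∃ t ∈ D, ∃ b, t * a = b * s) :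
    ∃ (B : Type u) (_ : Ring B) (φ : A →+* B), Injective φ ∧ HasLeftFractions φ D := by
  obtain ⟨i⟩ : Nonempty (OreLocalization.OreSet D) := by
    refine OreLocalization.nonempty_oreSet_iff.2 ⟨fun r₁ r₂ s hrs => ⟨1, ?_⟩, fun r s => ?_⟩
    · rw [sub_eq_zero.1 ((hD s.2).2 (r₁ - r₂) (by rw [sub_mul, hrs, sub_self]))]
    · obtain ⟨t, ht, b, e⟩ := hore s s.2 r
      exact ⟨b, ⟨t, ht⟩, e⟩
  refine ⟨OreLocalization D A, inferInstance, OreLocalization.numeratorRingHom, ?_, ?_, ?_⟩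
  · exact OreLocalization.numeratorHom_inj fun d hd x hx => (hD hd).1 x hx
  · exact fun d hd => OreLocalization.numerator_isUnit (⟨d, hd⟩ : D)
  · intro b
    induction b using OreLocalization.ind with
    | _ r s => exact ⟨s, s.2, r, OreLocalization.mul_cancel⟩

/-- The ring of left fractions over `D` is Artinian when `A` satisfies Robson's conditions. -/
theorem HasLeftFractions.isArtinianRing {A A' B : Type*} [Ring A] [Ring A'] [Ring B]
    {φ : A →+* B} {D : Submonoid A} (h : HasLeftFractions φ D) {π : A →+* A'} (hπ : Surjective π)
    (hker : RingHom.ker π = primeRadical A) (hA : IsLeftGoldie A')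
    (hnil : IsNilpotentIdeal (primeRadical A)) (hφ : Injective φ)
    (himg : π '' (D : Set A) = {x | IsRegElem x})
    (hD : ∀ c ∈ D, ∀ m ∈ primeRadical A, ∃ c₁ ∈ D, ∃ m₁ ∈ primeRadical A, c₁ * m = m₁ * c)
    (hacc : ∀ f : ℕ → Ideal A, (∀ i, IsSClosedLeftIdeal (D : Set A) (f i)) →
      (∀ i j, i ≤ j → f i ≤ f j) → ∃ N, ∀ k, N ≤ k → f k = f N) : IsArtinianRing B := by
  have hnoeth : IsNoetherianRing B := h.isNoetherianRing hacc
  let N := h.ext (primeRadical A)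
  have hN : N.IsTwoSided := h.ext_isTwoSided hD
  obtain ⟨k, hk⟩ := hnil
  have hNk : N ^ (k + 1) = ⊥ := by
    refine le_bot_iff.1 ((h.ext_pow_le hN _).trans ?_)
    rw [hk]
    rintro b ⟨d, hd, a, ha, e⟩
    rw [Submodule.mem_bot] at ha
    rw [ha, map_zero] at e
    exact (h.isUnit d hd).mul_right_eq_zero.1 e
  have hNJ : N ≤ Ring.jacobson B :=
    (le_primeRadical_of_pow_eq_bot hNk).trans primeRadical_le_jacobson
  have hcomap : RingHom.ker π = Ideal.comap φ (RingHom.ker (Ideal.Quotient.mk N)) := by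
    rw [Ideal.mk_ker]
    refine le_antisymm (fun a ha => h.map_mem_ext (hker ▸ ha)) ?_
    rintro a ⟨d, hd, m, hm, e⟩
    have hreg : IsRegElem (π d) := by
      have : π d ∈ π '' (D : Set A) := ⟨d, hd, rfl⟩
      rwa [himg] at this
    refine hreg.1 _ ?_
    rw [← hker, RingHom.mem_ker] at hm
    rw [← map_mul, hφ ((map_mul φ d a).trans e), hm]
  obtain ⟨ψ, hψ, -, hfrac⟩ := h.exists_quotient hπ Ideal.Quotient.mk_surjective hcomap
  have hmap : D.map π = regSubmonoid A' := SetLike.coe_injective himg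
  rw [hmap] at hfrac
  have hss : IsSemisimpleRing (B ⧸ N) :=
    hfrac.isSemisimpleRing (isSemiprimeNC_of_ker_eq hπ hker) hA
  have hJN : Ring.jacobson B ≤ N :=
    Ring.jacobson_le_of_eq_bot (IsSemisimpleRing.jacobson_eq_bot (B ⧸ N))
  have : IsSemiprimaryRing B := by
    refine (isSemiprimaryRing_iff B).2 ⟨?_, k + 1, le_bot_iff.1 ?_⟩
    · exact RingHom.isSemisimpleRing_of_surjective (Ideal.Quotient.factor hNJ)
        (Ideal.Quotient.factor_surjective hNJ)
    · exact (Ideal.pow_right_mono hJN _).trans hNk.le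
  exact (IsSemiprimaryRing.isNoetherian_iff_isArtinian (R := B) (M := B)).1 hnoeth

/-- Robson's conditions produce an Artinian left quotient ring with denominators in `D`. -/
theorem exists_leftQuotData {A : Type u} {A' : Type v} [Ring A] [Ring A'] {D : Submonoid A}
    {π : A →+* A'} (hπ : Surjective π)
    (hker : RingHom.ker π = primeRadical A) (hA : IsLeftGoldie A')
    (hnil : IsNilpotentIdeal (primeRadical A)) (hreg : (D : Set A) ⊆ regSet A)
    (himg : π '' (D : Set A) = {x | IsRegElem x})
    (hD : ∀ c ∈ D, ∀ m ∈ primeRadical A, ∃ c₁ ∈ D, ∃ m₁ ∈ primeRadical A, c₁ * m = m₁ * c)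
    (hacc : ∀ f : ℕ → Ideal A, (∀ i, IsSClosedLeftIdeal (D : Set A) (f i)) →
      (∀ i j, i ≤ j → f i ≤ f j) → ∃ N, ∀ k, N ≤ k → f k = f N) :
    IsLeftOreSubset (D : Set A) ∧
      ∃ d : LeftQuotData A, IsArtinianRing d.Q ∧ HasLeftFractions d.φ D := by
  have hore : ∀ s ∈ D, ∀ a : A, ∃ t ∈ D, ∃ b, t * a = b * s := fun s hs a =>
    exists_mul_eq_mul_of_map hπ (isSemiprimeNC_of_ker_eq hπ hker) hA himg (by rwa [hker]) hs a
  refine ⟨⟨D.one_mem, fun s hs t ht => D.mul_mem hs ht, hore⟩, ?_⟩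
  obtain ⟨B, _, φ, hφ, h⟩ := exists_hasLeftFractions hreg hore
  have hart := h.isArtinianRing hπ hker hA hnil hφ himg hD hacc
  refine ⟨⟨B, φ, hφ, fun c hc => h.isUnit_of_isArtinian hφ hc.2, fun b => ?_⟩, hart, h⟩
  obtain ⟨d, hd, a, e⟩ := h.denom b
  exact ⟨d, a, hreg hd, e⟩

/-- If `D` gives the denominators in one left quotient ring, it does so in every other. -/
theorem HasLeftFractions.transfer {A B B' : Type*} [Ring A] [Ring B] [Ring B'] {φ : A →+* B}
    {φ' : A →+* B'} {D : Submonoid A} (h : HasLeftFractions φ D) (hφ : IsLeftQuotRing φ)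
    (hφ' : IsLeftQuotRing φ') (hD : (D : Set A) ⊆ regSet A) : HasLeftFractions φ' D := by
  refine ⟨fun d hd => hφ'.isUnit d (hD hd), fun b => ?_⟩
  obtain ⟨c, r, hc, e⟩ := hφ'.denom b
  obtain ⟨u, hu⟩ := hφ.isUnit c hc
  obtain ⟨s, hs, x, hx⟩ := h.denom (↑u⁻¹ : B)
  have hsx : s = x * c := hφ.inj (by rw [map_mul, ← hx, ← hu, mul_assoc, Units.inv_mul, mul_one])
  refine ⟨s, hs, x * r, ?_⟩
  rw [hsx, map_mul, mul_assoc, e, map_mul]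

/-- A left quotient ring of a ring may be taken in the universe of that ring. -/
theorem IsLeftQuotRing.exists_leftQuotData {A : Type v} {B : Type u} [Ring A] [Ring B]
    {ψ : A →+* B} (hψ : IsLeftQuotRing ψ) :
    ∃ (e : LeftQuotData A) (θ : B ≃+* e.Q), (θ : B →+* e.Q).comp ψ = e.φ := by
  choose c r hc hcr using hψ.denom
  have hinj : Injective fun b => (c b, r b) := by
    intro b b' hb
    obtain ⟨hcb, hrb⟩ := Prod.mk.inj hb
    refine (hψ.isUnit _ (hc b)).mul_left_cancel ?_
    rw [hcr, hrb, hcb, hcr]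
  have : Small.{v} B := small_of_injective hinj
  let θ : B ≃+* Shrink.{v} B := (Shrink.ringEquiv B).symm
  refine ⟨⟨Shrink.{v} B, (θ : B →+* Shrink.{v} B).comp ψ, θ.injective.comp hψ.inj,
    fun a ha => (hψ.isUnit a ha).map (θ : B →+* Shrink.{v} B), fun q => ?_⟩, θ, rfl⟩
  obtain ⟨b, rfl⟩ := θ.surjective q
  exact ⟨c b, r b, hc b, by simp [← hcr, map_mul]⟩

end Criterion

/-- **Corollary (`a10Sep12`).** Let `R` be a ring, `n` its prime radical, `R̄ = R/n`
(realized by a surjective `π` with kernel `n`).  TFAE: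
(1) `R` has a left Artinian left quotient ring;
(2) (a) `R̄` is a left Goldie ring, (b) `n` is a nilpotent ideal, (c) there is a submonoid
`C''` of `C` whose image in `R̄` is `C̄`, (d) for all `c ∈ C''` and `m ∈ n` there are
`c₁ ∈ C''`, `m₁ ∈ n` with `c₁ m = m₁ c`, and (e) `R` satisfies the ACC on `C''`-closed left
ideals.  Moreover, if these conditions hold then (for any such `C''`): `C''` is a left Ore
set in `R`, `C''⁻¹R = Q`, `C''⁻¹n` is the prime radical of `Q` and is nilpotent of
nilpotency degree `ν`, and the map `Q/C''⁻¹n → Q̄`, `c⁻¹r ↦ c̄⁻¹r̄`, is a ring isomorphism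
(encoded by a surjective `θ : Q → Q̄` with kernel `C''⁻¹n` and `θ ∘ φ = ψ ∘ π`). -/
theorem left_artinian_left_quotient_ring_criterion_robson_weak_submonoid
    {R : Type u} [Ring R] (Rbar : Type v) [Ring Rbar] (π : R →+* Rbar)
    (hπsurj : Function.Surjective π) (hπker : RingHom.ker π = primeRadical R) :
    (HasArtinianLeftQuot R ↔
      (IsLeftGoldie Rbar ∧
        IsNilpotentIdeal (primeRadical R) ∧
        (∃ C'' : Submonoid R, (↑C'' : Set R) ⊆ regSet R ∧
          π '' (↑C'' : Set R) = {x : Rbar | IsRegElem x} ∧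
          (∀ c ∈ C'', ∀ m ∈ primeRadical R,
            ∃ c₁ ∈ C'', ∃ m₁ ∈ primeRadical R, c₁ * m = m₁ * c) ∧
          (∀ f : ℕ → Ideal R, (∀ i, IsSClosedLeftIdeal (↑C'' : Set R) (f i)) →
            (∀ i j, i ≤ j → f i ≤ f j) → ∃ N, ∀ k, N ≤ k → f k = f N)))) ∧
    (HasArtinianLeftQuot R →
      ∀ C'' : Submonoid R, (↑C'' : Set R) ⊆ regSet R →
        π '' (↑C'' : Set R) = {x : Rbar | IsRegElem x} →
        (∀ c ∈ C'', ∀ m ∈ primeRadical R,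
          ∃ c₁ ∈ C'', ∃ m₁ ∈ primeRadical R, c₁ * m = m₁ * c) →
        (∀ f : ℕ → Ideal R, (∀ i, IsSClosedLeftIdeal (↑C'' : Set R) (f i)) →
          (∀ i j, i ≤ j → f i ≤ f j) → ∃ N, ∀ k, N ≤ k → f k = f N) →
        IsLeftOreSubset (↑C'' : Set R) ∧
        ∀ d : LeftQuotData R, IsArtinianRing d.Q →
          (∀ q : d.Q, ∃ c ∈ C'', ∃ r : R, d.φ c * q = d.φ r) ∧
          ((↑(primeRadical d.Q) : Set d.Q) =
            {q : d.Q | ∃ c ∈ C'', ∃ a ∈ primeRadical R, d.φ c * q = d.φ a}) ∧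
          IsNilpotentIdeal (primeRadical d.Q) ∧
          (∀ k : ℕ, primeRadical d.Q ^ k = ⊥ ↔ primeRadical R ^ k = ⊥) ∧
          ∃ (e : LeftQuotData Rbar) (θ : d.Q →+* e.Q),
            Function.Surjective θ ∧ RingHom.ker θ = primeRadical d.Q ∧
              θ.comp d.φ = e.φ.comp π) := by
  have forward : ∀ d : LeftQuotData R, IsArtinianRing d.Q →
      IsLeftGoldie Rbar ∧ IsNilpotentIdeal (primeRadical R) := by
    intro d hd
    have h := d.quot.hasLeftFractions
    obtain ⟨ψ, hψ, -, hfrac⟩ := h.exists_residue d.quot.inj hπsurj hπker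
    have : IsArtinianRing (d.Q ⧸ primeRadical d.Q) :=
      Ideal.Quotient.mk_surjective.isArtinianRing (f := Ideal.Quotient.mk (primeRadical d.Q))
    exact ⟨hfrac.isLeftGoldie hψ, h.isNilpotentIdeal d.quot.inj⟩
  refine ⟨⟨?_, ?_⟩, ?_⟩
  · rintro ⟨d, hd⟩
    have h := d.quot.hasLeftFractions
    refine ⟨(forward d hd).1, (forward d hd).2, regSubmonoid R, Set.Subset.rfl, ?_,
      fun c hc m hm => h.exists_mul_eq_of_mem_primeRadical d.quot.inj hc hm,
      fun f hf hmono => h.acc_closed d.quot.inj f hf hmono⟩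
    have key := h.isRegElem_map_iff d.quot.inj hπsurj hπker
    ext x
    constructor
    · rintro ⟨c, hc, rfl⟩
      exact (key c).2 hc
    · intro hx
      obtain ⟨a, rfl⟩ := hπsurj x
      exact ⟨a, (key a).1 hx, rfl⟩
  · rintro ⟨hA, hnil, D, hreg, himg, hD, hacc⟩
    obtain ⟨-, d, hd, -⟩ := exists_leftQuotData hπsurj hπker hA hnil hreg himg hD hacc
    exact ⟨d, hd⟩
  · rintro ⟨d₀, hd₀⟩ D hreg himg hD hacc
    obtain ⟨hA, hnil⟩ := forward d₀ hd₀
    obtain ⟨hore, d₁, -, h₁⟩ := exists_leftQuotData hπsurj hπker hA hnil hreg himg hD hacc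
    refine ⟨hore, fun d hd => ?_⟩
    have h : HasLeftFractions d.φ D := h₁.transfer d₁.quot d.quot hreg
    refine ⟨h.denom, ?_, isNilpotentIdeal_primeRadical,
      h.primeRadical_pow_eq_bot_iff d.quot.inj, ?_⟩
    · rw [← h.ext_primeRadical d.quot.inj]
      rfl
    · obtain ⟨ψ, hψ, hcomp, hfrac⟩ := h.exists_residue d.quot.inj hπsurj hπker
      have hmap : D.map π = regSubmonoid Rbar := SetLike.coe_injective himg
      rw [hmap] at hfrac
      have hquot : IsLeftQuotRing ψ := ⟨hψ, hfrac.isUnit, fun q =>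
        let ⟨c, hc, r, e⟩ := hfrac.denom q
        ⟨c, r, hc, e⟩⟩
      obtain ⟨e, θ, hθ⟩ := hquot.exists_leftQuotData
      refine ⟨e, (θ : _ →+* e.Q).comp (Ideal.Quotient.mk (primeRadical d.Q)),
        θ.surjective.comp Ideal.Quotient.mk_surjective, ?_, ?_⟩
      · ext q
        simp [RingHom.mem_ker, Ideal.Quotient.eq_zero_iff_mem]
      · rw [RingHom.comp_assoc, ← hcomp, ← RingHom.comp_assoc, hθ]
end

section
/- Let R be a ring with a left Artinian left quotient ring Q = C⁻¹R, and let I be a C-closed ideal of R such that I ⊆ n. Then the set C_{R/I} of regular elements of the factor ring R/I is equal to {c + I : c ∈ C}. -/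
open Function

universe u v

theorem IsRegElem.mul {R : Type*} [Ring R] {a b : R} (ha : IsRegElem a) (hb : IsRegElem b) :
    IsRegElem (a * b) :=
  ⟨fun x hx => hb.1 x (ha.1 _ (by rw [← mul_assoc, hx])),
    fun x hx => ha.2 x (hb.2 _ (by rw [mul_assoc, hx]))⟩

/-- In a left Artinian ring, a left ideal stable under right multiplication by a unit is stable
under right multiplication by its inverse. -/
theorem Ideal.mul_unit_inv_mem {Q : Type*} [Ring Q] [IsArtinianRing Q] (N : Ideal Q) (u : Qˣ)
    (h : ∀ x ∈ N, x * (u : Q) ∈ N) {x : Q} (hx : x ∈ N) : x * ((u⁻¹ : Qˣ) : Q) ∈ N := by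
  let f : N →ₗ[Q] N := (LinearMap.toSpanSingleton Q Q (u : Q)).restrict h
  have hf : Injective f := by
    intro a b hab
    have hab' : (a : Q) * u = b * u := congrArg Subtype.val hab
    exact Subtype.ext (u.isUnit.mul_left_injective hab')
  obtain ⟨y, hy⟩ := IsArtinian.surjective_of_injective_endomorphism f hf ⟨x, hx⟩
  have hy' : (y : Q) * u = x := congrArg Subtype.val hy
  rw [← hy', Units.mul_inv_cancel_right]
  exact y.2

/-- The annihilator of the simple module `Q / M` is a prime ideal contained in `M`. -/
theorem exists_isPrimeNC_le_of_isMaximal {Q : Type*} [Ring Q] (M : Ideal Q) (hM : M.IsMaximal) :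
    ∃ P : Ideal Q, P.IsPrimeNC ∧ P ≤ M := by
  let P : Ideal Q :=
    { carrier := {a | ∀ x, a * x ∈ M}
      add_mem' := fun ha hb x => by rw [add_mul]; exact M.add_mem (ha x) (hb x)
      zero_mem' := fun x => by rw [zero_mul]; exact M.zero_mem
      smul_mem' := fun c a ha x => by
        rw [smul_eq_mul, mul_assoc]; exact M.mul_mem_left c (ha x) }
  have hPM : P ≤ M := fun a ha => by simpa using ha 1
  refine ⟨P, ⟨?_, ?_, ?_⟩, hPM⟩
  · rintro h
    exact hM.ne_top (top_le_iff.mp (h ▸ hPM))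
  · intro a ha r x
    rw [mul_assoc]
    exact ha (r * x)
  · intro a b hab
    by_contra! hne
    obtain ⟨x, hx⟩ : ∃ x, b * x ∉ M := by simpa [P] using hne.2
    refine hne.1 fun y => ?_
    have htop : M ⊔ Ideal.span {b * x} = ⊤ :=
      hM.out.2 _ (left_lt_sup.mpr fun h => hx (h (Ideal.mem_span_singleton_self _)))
    obtain ⟨m, hm, z, hz, rfl⟩ := Submodule.mem_sup.mp (htop ▸ Submodule.mem_top : y ∈ _)
    obtain ⟨q, rfl⟩ := Ideal.mem_span_singleton'.mp hz
    rw [mul_add]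
    refine M.add_mem (M.mul_mem_left a hm) ?_
    simpa only [mul_assoc] using hab q x

/-- If a left ideal lies in the prime radical, then every element congruent to `1` modulo it is
left invertible. -/
theorem exists_mul_eq_one_of_le_primeRadical {Q : Type*} [Ring Q] {J : Ideal Q}
    (hJ : J ≤ primeRadical Q) {x : Q} (hx : x - 1 ∈ J) : ∃ y, y * x = 1 := by
  rw [← Ideal.mem_span_singleton', ← Ideal.eq_top_iff_one]
  by_contra hne
  obtain ⟨M, hM, hxM⟩ := Ideal.exists_le_maximal _ hne
  obtain ⟨P, hP, hPM⟩ := exists_isPrimeNC_le_of_isMaximal M hM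
  have h1 : x - 1 ∈ M := hPM ((hJ.trans (sInf_le hP)) hx)
  refine hM.ne_top ((Ideal.eq_top_iff_one M).mpr ?_)
  simpa using M.sub_mem (hxM (Ideal.mem_span_singleton_self x)) h1

namespace IsLeftQuotRing

variable {R : Type u} {Q : Type v} [Ring R] [Ring Q] {φ : R →+* Q}

theorem mem_of_map_mul_mem (hquot : IsLeftQuotRing φ) (N : Ideal Q) {c : R} (hc : IsRegElem c)
    {q : Q} (h : φ c * q ∈ N) : q ∈ N := by
  obtain ⟨u, hu⟩ := hquot.isUnit c hc
  rw [← hu] at h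
  simpa using N.mul_mem_left ((u⁻¹ : Qˣ) : Q) h

/-- A left ideal of a left Artinian left quotient ring that is stable under right multiplication
by `R` is two-sided. -/
theorem isTwoSidedNC_of_mul_map_mem [IsArtinianRing Q] (hquot : IsLeftQuotRing φ) (N : Ideal Q)
    (h : ∀ x ∈ N, ∀ r : R, x * φ r ∈ N) : N.IsTwoSidedNC := by
  intro x hx q
  obtain ⟨c, r, hc, hq⟩ := hquot.denom q
  obtain ⟨u, hu⟩ := hquot.isUnit c hc
  have hq' : q = ((u⁻¹ : Qˣ) : Q) * φ r := by rw [← hq, ← hu, Units.inv_mul_cancel_left]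
  rw [hq', ← mul_assoc]
  exact h _ (N.mul_unit_inv_mem u (fun y hy => hu ▸ h y hy c) hx) r

/-- Prime ideals of a left Artinian left quotient ring contract to prime ideals. -/
theorem comap_isPrimeNC [IsArtinianRing Q] (hquot : IsLeftQuotRing φ) {P : Ideal Q}
    (hP : P.IsPrimeNC) : (P.comap φ).IsPrimeNC := by
  obtain ⟨hne, htwo, hprime⟩ := hP
  refine ⟨?_, ?_, ?_⟩
  · rwa [Ne, Ideal.comap_eq_top_iff]
  · intro a ha r
    rw [Ideal.mem_comap, map_mul]
    exact htwo _ ha _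
  · intro a b hab
    let X : Ideal Q :=
      { carrier := {x | ∀ r : R, x * φ r * φ b ∈ P}
        add_mem' := fun hx hy r => by
          rw [add_mul, add_mul]; exact P.add_mem (hx r) (hy r)
        zero_mem' := fun r => by simp
        smul_mem' := fun c x hx r => by
          rw [smul_eq_mul, mul_assoc, mul_assoc, ← mul_assoc x]
          exact P.mul_mem_left c (hx r) }
    have hX : X.IsTwoSidedNC := hquot.isTwoSidedNC_of_mul_map_mem X fun x hx s r => by
      rw [mul_assoc x, ← map_mul]
      exact hx (s * r)
    have haX : φ a ∈ X := fun r => by simpa using hab r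
    refine hprime (φ a) (φ b) fun q => ?_
    simpa using hX _ haX q 1

theorem map_le_primeRadical [IsArtinianRing Q] (hquot : IsLeftQuotRing φ) {I : Ideal R}
    (hI : I ≤ primeRadical R) : I.map φ ≤ primeRadical Q :=
  le_sInf fun _ hP => Ideal.map_le_iff_le_comap.mpr (hI.trans (sInf_le (hquot.comap_isPrimeNC hP)))

/-- Elements of the extension of a left ideal `I` have the form `c⁻¹a` with `a ∈ I`. -/
theorem exists_of_mem_map (hquot : IsLeftQuotRing φ) {I : Ideal R} {q : Q} (hq : q ∈ I.map φ) :
    ∃ c, IsRegElem c ∧ ∃ a ∈ I, φ c * q = φ a := by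
  have one_reg : IsRegElem (1 : R) := ⟨fun x hx => by simpa using hx, fun x hx => by simpa using hx⟩
  have fraction (p : Q) {s : R} (hs : IsRegElem s) :
      ∃ t r : R, IsRegElem t ∧ φ t * p = φ r * φ s := by
    obtain ⟨u, hu⟩ := hquot.isUnit s hs
    obtain ⟨t, r, ht, h⟩ := hquot.denom (p * ((u⁻¹ : Qˣ) : Q))
    refine ⟨t, r, ht, ?_⟩
    rw [← h, ← hu, ← mul_assoc, Units.inv_mul_cancel_right]
  induction hq using Submodule.span_induction with
  | mem x hx =>
    obtain ⟨a, ha, rfl⟩ := hx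
    exact ⟨1, one_reg, a, ha, by simp⟩
  | zero => exact ⟨1, one_reg, 0, I.zero_mem, by simp⟩
  | add x y _ _ hx hy =>
    obtain ⟨s, hs, a, ha, hsa⟩ := hx
    obtain ⟨s', hs', a', ha', hsa'⟩ := hy
    obtain ⟨t, r, ht, htr⟩ := fraction (φ s') hs
    refine ⟨t * s', ht.mul hs', r * a + t * a',
      I.add_mem (I.mul_mem_left r ha) (I.mul_mem_left t ha'), ?_⟩
    rw [map_mul, mul_add, map_add, map_mul, map_mul, ← hsa, ← hsa', ← mul_assoc (φ r), ← htr,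
      mul_assoc (φ t) (φ s') y]
  | smul p x _ hx =>
    obtain ⟨s, hs, a, ha, hsa⟩ := hx
    obtain ⟨t, r, ht, htr⟩ := fraction p hs
    refine ⟨t, ht, r * a, I.mul_mem_left r ha, ?_⟩
    rw [smul_eq_mul, ← mul_assoc, htr, map_mul, ← hsa, mul_assoc]

theorem comap_map_of_closed (hquot : IsLeftQuotRing φ) {I : Ideal R}
    (hIclosed : ∀ c : R, IsRegElem c → ∀ r : R, c * r ∈ I → r ∈ I) : (I.map φ).comap φ = I := by
  refine le_antisymm (fun r hr => ?_) Ideal.le_comap_map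
  obtain ⟨c, hc, a, ha, h⟩ := hquot.exists_of_mem_map (Ideal.mem_comap.mp hr)
  rw [← map_mul] at h
  exact hIclosed c hc r (hquot.inj h ▸ ha)

theorem map_isTwoSidedNC [IsArtinianRing Q] (hquot : IsLeftQuotRing φ) {I : Ideal R}
    (hI : I.IsTwoSidedNC) : (I.map φ).IsTwoSidedNC := by
  refine hquot.isTwoSidedNC_of_mul_map_mem _ fun x hx r => ?_
  obtain ⟨c, hc, a, ha, h⟩ := hquot.exists_of_mem_map hx
  refine hquot.mem_of_map_mul_mem _ hc ?_
  rw [← mul_assoc, h, ← map_mul]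
  exact Ideal.mem_map_of_mem φ (hI a ha r)

/-- An element that becomes a unit in the left quotient ring is regular. -/
theorem isRegElem_of_isUnit (hquot : IsLeftQuotRing φ) {c : R} (hc : IsUnit (φ c)) :
    IsRegElem c := by
  refine ⟨fun x hx => hquot.inj ?_, fun x hx => hquot.inj ?_⟩
  · rw [map_zero, ← hc.mul_right_eq_zero, ← map_mul, hx, map_zero]
  · rw [map_zero, ← hc.mul_left_eq_zero, ← map_mul, hx, map_zero]

end IsLeftQuotRing

/-- In a left Artinian ring, an element which is right regular modulo a two-sided ideal contained
in the prime radical is a unit. -/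
theorem isUnit_of_regular_mod {Q : Type*} [Ring Q] [IsArtinianRing Q] {J : Ideal Q}
    (hJ : J.IsTwoSidedNC) (hJn : J ≤ primeRadical Q) {c : Q}
    (hc : ∀ q : Q, q * c ∈ J → q ∈ J) : IsUnit c := by
  let f : (Q ⧸ J) →ₗ[Q] (Q ⧸ J) :=
    Submodule.mapQ J J (LinearMap.toSpanSingleton Q Q c) fun x hx => hJ x hx c
  have hf : Injective f := by
    rw [injective_iff_map_eq_zero]
    intro x hx
    obtain ⟨q, rfl⟩ := Submodule.Quotient.mk_surjective J x
    exact (Submodule.Quotient.mk_eq_zero J).mpr (hc q ((Submodule.Quotient.mk_eq_zero J).mp hx))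
  obtain ⟨x, hx⟩ := IsArtinian.surjective_of_injective_endomorphism f hf (Submodule.Quotient.mk 1)
  obtain ⟨u, rfl⟩ := Submodule.Quotient.mk_surjective J x
  have huc : u * c - 1 ∈ J := (Submodule.Quotient.eq J).mp hx
  obtain ⟨y, hy⟩ := exists_mul_eq_one_of_le_primeRadical hJn huc
  have hleft : y * u * c = 1 := by rw [mul_assoc, hy]
  exact IsUnit.of_mul_eq_one_right _ hleft

/-- **Theorem (`13Sep12`.(1)).** Let `R` be a ring with a left Artinian left quotient ring
`Q = C⁻¹R`, and let `I` be a `C`-closed (two-sided) ideal of `R` with `I ⊆ n`.  Then the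
set of regular elements of the factor ring `R/I` (realized by a surjective `ρ : R → R'`
with kernel `I`) equals `{c + I : c ∈ C}`, i.e. the image of `C` under `ρ`. -/
theorem regular_elements_of_factor_ring
    {R : Type u} [Ring R] {Q : Type v} [Ring Q] (φ : R →+* Q)
    (hquot : IsLeftQuotRing φ) (hart : IsArtinianRing Q)
    (I : Ideal R) (hI2 : I.IsTwoSidedNC)
    (hIclosed : ∀ c : R, IsRegElem c → ∀ r : R, c * r ∈ I → r ∈ I)
    (hIn : I ≤ primeRadical R)
    {R' : Type w} [Ring R'] (ρ : R →+* R') (hρsurj : Function.Surjective ρ)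
    (hρker : RingHom.ker ρ = I) :
    {x : R' | IsRegElem x} = ρ '' regSet R := by
  have hker (r : R) : ρ r = 0 ↔ r ∈ I := by rw [← hρker, RingHom.mem_ker]
  have hcomap := hquot.comap_map_of_closed hIclosed
  have hmem (r : R) : φ r ∈ I.map φ ↔ r ∈ I := by rw [← Ideal.mem_comap, hcomap]
  have htwo := hquot.map_isTwoSidedNC hI2
  ext x
  constructor
  · intro hx
    obtain ⟨c, rfl⟩ := hρsurj x
    refine ⟨c, hquot.isRegElem_of_isUnit
      (isUnit_of_regular_mod htwo (hquot.map_le_primeRadical hIn) fun q hq => ?_), rfl⟩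
    obtain ⟨s, r, hs, hsr⟩ := hquot.denom q
    refine hquot.mem_of_map_mul_mem _ hs ?_
    have hrc : r * c ∈ I := by
      rw [← hmem, map_mul, ← hsr, mul_assoc]
      exact Ideal.mul_mem_left _ _ hq
    rw [hsr, hmem, ← hker]
    exact hx.2 _ (by rw [← map_mul, hker]; exact hrc)
  · rintro ⟨c, hc, rfl⟩
    refine ⟨fun y hy => ?_, fun y hy => ?_⟩ <;> obtain ⟨r, rfl⟩ := hρsurj y <;>
      rw [← map_mul, hker] at hy <;> rw [hker]
    · exact hIclosed c hc r hy
    · obtain ⟨u, hu⟩ := hquot.isUnit c hc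
      rw [← hmem, map_mul, ← hu] at hy
      rw [← hmem]
      simpa using htwo _ hy ((u⁻¹ : Qˣ) : Q)
end

section
/- Let R be a ring with a left Artinian left quotient ring Q = C⁻¹R, and let I be a C-closed ideal of R such that I ⊆ n. Then the factor ring R/I has a left Artinian left quotient ring Q(R/I), the set C⁻¹I is a (two-sided) ideal of Q, and the map Q/C⁻¹I → Q(R/I), c⁻¹r + C⁻¹I ↦ (c+I)⁻¹(r+I), is a ring isomorphism with inverse (c+I)⁻¹(r+I) ↦ c⁻¹r + C⁻¹I. -/
open Function

universe u v

theorem IsRegElem.of_isUnit_map_s12 {R S : Type*} [Ring R] [Ring S] {f : R →+* S}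
    (hf : Injective f) {c : R} (hc : IsUnit (f c)) : IsRegElem c := by
  refine ⟨fun x hx => ?_, fun x hx => ?_⟩ <;> rw [← map_eq_zero_iff f hf]
  · exact hc.mul_right_eq_zero.1 (by rw [← map_mul, hx, map_zero])
  · exact hc.mul_left_eq_zero.1 (by rw [← map_mul, hx, map_zero])

/-- In a left Artinian ring an element with zero left annihilator is a unit. -/
theorem IsArtinianRing.isUnit_of_mul_right_cancel_zero {A : Type*} [Ring A] [IsArtinianRing A]
    {x : A} (hx : ∀ y, y * x = 0 → y = 0) : IsUnit x := by
  have hinj : Injective (LinearMap.toSpanSingleton A A x) :=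
    (injective_iff_map_eq_zero _).2 fun y hy => hx y (by simpa using hy)
  obtain ⟨y, hy⟩ := IsArtinian.surjective_of_injective_endomorphism _ hinj 1
  have hyx : y * x = 1 := by simpa using hy
  refine ⟨⟨x, y, sub_eq_zero.1 (hx _ ?_), hyx⟩, rfl⟩
  rw [sub_mul, mul_assoc, hyx, mul_one, one_mul, sub_self]

namespace IsLeftQuotRing

variable {R : Type u} {Q : Type v} [Ring R] [Ring Q] {φ : R →+* Q}

/-- The left Ore condition for the regular elements. -/
theorem ore (h : IsLeftQuotRing φ) (r : R) {c : R} (hc : IsRegElem c) :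
    ∃ c' r' : R, IsRegElem c' ∧ c' * r = r' * c := by
  obtain ⟨u, hu⟩ := h.isUnit c hc
  obtain ⟨c', r', hc', e⟩ := h.denom (φ r * ↑u⁻¹)
  refine ⟨c', r', hc', h.inj ?_⟩
  rw [map_mul, map_mul, ← e, ← hu, mul_assoc, mul_assoc, Units.inv_mul, mul_one]

/-- The left ideal `C⁻¹K` of `Q`. -/
def locIdeal (h : IsLeftQuotRing φ) (K : Ideal R) : Ideal Q where
  carrier := locSet φ K
  zero_mem' := ⟨1, 0, ⟨fun x hx => by simpa using hx, fun x hx => by simpa using hx⟩,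
    K.zero_mem, by simp⟩
  add_mem' := by
    rintro p q ⟨c, a, hc, ha, e⟩ ⟨d, b, hd, hb, f⟩
    obtain ⟨c', r', hc', e'⟩ := h.ore c hd
    refine ⟨c' * c, c' * a + r' * b, hc'.mul hc,
      K.add_mem (K.mul_mem_left _ ha) (K.mul_mem_left _ hb), ?_⟩
    rw [mul_add, map_add, map_mul _ c' a, map_mul _ r' b, ← e, ← f, ← mul_assoc, ← mul_assoc,
      ← map_mul, ← map_mul, e']
  smul_mem' := by
    rintro p q ⟨c, a, hc, ha, e⟩
    obtain ⟨d, r, hd, f⟩ := h.denom p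
    obtain ⟨c', r', hc', e'⟩ := h.ore r hc
    refine ⟨c' * d, r' * a, hc'.mul hd, K.mul_mem_left _ ha, ?_⟩
    rw [smul_eq_mul, map_mul _ r' a, ← e, ← mul_assoc, ← mul_assoc, ← map_mul, ← e', map_mul,
      map_mul, mul_assoc (φ c'), f]

theorem coe_locIdeal (h : IsLeftQuotRing φ) (K : Ideal R) :
    (h.locIdeal K : Set Q) = locSet φ K := rfl

theorem mul_map_mem_locIdeal (h : IsLeftQuotRing φ) {K : Ideal R} (hK : K.IsTwoSidedNC) {q : Q}
    (hq : q ∈ h.locIdeal K) (r : R) : q * φ r ∈ h.locIdeal K := by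
  obtain ⟨c, a, hc, ha, e⟩ := hq
  exact ⟨c, a * r, hc, hK a ha r, by rw [← mul_assoc, e, map_mul]⟩

/-- Right multiplication by `φ c` is an injective, hence surjective, endomorphism of the Artinian
module `C⁻¹K`, so `C⁻¹K` is stable under right multiplication by `(φ c)⁻¹`. -/
theorem mul_mem_locIdeal (h : IsLeftQuotRing φ) [IsArtinianRing Q] {K : Ideal R}
    (hK : K.IsTwoSidedNC) : (h.locIdeal K).IsTwoSidedNC := by
  intro q hq p
  obtain ⟨c, r, hc, e⟩ := h.denom p
  let f : h.locIdeal K →ₗ[Q] h.locIdeal K :=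
    (LinearMap.toSpanSingleton Q Q (φ c)).restrict fun x hx => by
      simpa using h.mul_map_mem_locIdeal hK hx c
  have hf : Injective f := fun x y hxy =>
    Subtype.ext ((h.isUnit c hc).mul_left_injective (by simpa [f] using congrArg Subtype.val hxy))
  obtain ⟨y, hy⟩ := IsArtinian.surjective_of_injective_endomorphism f hf ⟨q, hq⟩
  have hyq : (y : Q) * φ c = q := by simpa [f] using congrArg Subtype.val hy
  rw [← hyq, mul_assoc, e]
  exact h.mul_map_mem_locIdeal hK y.2 r

theorem map_mem_locIdeal_iff (h : IsLeftQuotRing φ) {K : Ideal R}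
    (hK : ∀ c : R, IsRegElem c → ∀ r : R, c * r ∈ K → r ∈ K) {r : R} :
    φ r ∈ h.locIdeal K ↔ r ∈ K := by
  refine ⟨?_, fun hr => ⟨1, r, .of_isUnit_map h.inj (by simp), hr, by simp⟩⟩
  rintro ⟨c, a, hc, ha, e⟩
  rw [← map_mul] at e
  exact hK c hc r (h.inj e ▸ ha)

/-- If `θ : Q → S` is a surjective ring homomorphism onto a left Artinian ring and its restriction
to `R` factors through an embedding `ψ : R' → S`, then `S` is a left quotient
ring of `R'`. -/
theorem of_surjective (h : IsLeftQuotRing φ) {R' : Type*} {S : Type*} [Ring R'] [Ring S]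
    [IsArtinianRing S] {ρ : R →+* R'} {θ : Q →+* S} (hθ : Surjective θ)
    {ψ : R' →+* S} (hψ : Injective ψ) (comm : θ.comp φ = ψ.comp ρ) : IsLeftQuotRing ψ := by
  have comm' (r : R) : θ (φ r) = ψ (ρ r) := RingHom.congr_fun comm r
  have isUnit_of_reg {c : R} (hc : IsRegElem c) : IsUnit (ψ (ρ c)) :=
    comm' c ▸ (h.isUnit c hc).map θ
  have denom (s : S) : ∃ c r : R, IsRegElem c ∧ ψ (ρ c) * s = ψ (ρ r) := by
    obtain ⟨q, rfl⟩ := hθ s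
    obtain ⟨c, r, hc, e⟩ := h.denom q
    exact ⟨c, r, hc, by rw [← comm', ← comm', ← map_mul, e]⟩
  refine ⟨hψ, fun c hc => IsArtinianRing.isUnit_of_mul_right_cancel_zero fun y hy => ?_,
    fun s => ?_⟩
  · obtain ⟨d, r, hd, e⟩ := denom y
    have hr : ρ r = 0 := hc.2 _ (hψ (by rw [map_mul, ← e, mul_assoc, hy, mul_zero, map_zero]))
    rw [hr, map_zero] at e
    exact (isUnit_of_reg hd).mul_right_eq_zero.1 e
  · obtain ⟨c, r, hc, e⟩ := denom s
    exact ⟨ρ c, ρ r, .of_isUnit_map hψ (isUnit_of_reg hc), e⟩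

end IsLeftQuotRing

/-- **Theorem (`13Sep12`.(2)).** Let `R` be a ring with a left Artinian left quotient ring
`Q = C⁻¹R`, and let `I` be a `C`-closed (two-sided) ideal of `R` with `I ⊆ n`.  Then the
factor ring `R/I` (realized by a surjective `ρ : R → R'` with kernel `I`) has a left
Artinian left quotient ring `Q(R/I)`, the set `C⁻¹I` is a (two-sided) ideal of `Q`, and the
map `Q/C⁻¹I → Q(R/I)`, `c⁻¹r + C⁻¹I ↦ (c+I)⁻¹(r+I)`, is a ring isomorphism (encoded by a
surjective ring homomorphism `θ : Q → Q(R/I)` with kernel `C⁻¹I` such that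
`θ ∘ φ = ψ ∘ ρ`, where `ψ : R/I → Q(R/I)` is the canonical embedding). -/
theorem factor_ring_has_left_artinian_left_quotient_ring
    {R : Type u} [Ring R] {Q : Type u} [Ring Q] (φ : R →+* Q)
    (hquot : IsLeftQuotRing φ) (hart : IsArtinianRing Q)
    (I : Ideal R) (hI2 : I.IsTwoSidedNC)
    (hIclosed : ∀ c : R, IsRegElem c → ∀ r : R, c * r ∈ I → r ∈ I)
    (hIn : I ≤ primeRadical R)
    {R' : Type u} [Ring R'] (ρ : R →+* R') (hρsurj : Function.Surjective ρ)
    (hρker : RingHom.ker ρ = I) :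
    (∃ J : Ideal Q, J.IsTwoSidedNC ∧ (↑J : Set Q) = locSet φ I) ∧
    HasArtinianLeftQuot R' ∧
    ∃ e : LeftQuotData R', IsArtinianRing e.Q ∧
      ∃ θ : Q →+* e.Q, Function.Surjective θ ∧
        (↑(RingHom.ker θ) : Set Q) = locSet φ I ∧ θ.comp φ = e.φ.comp ρ := by
  have hJ2 := hquot.mul_mem_locIdeal hI2
  have hmem (r : R) : φ r ∈ hquot.locIdeal I ↔ ρ r = 0 := by
    rw [hquot.map_mem_locIdeal_iff hIclosed, ← hρker, RingHom.mem_ker]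
  have : (hquot.locIdeal I).IsTwoSided := ⟨fun r ha => hJ2 _ ha r⟩
  let θ : Q →+* Q ⧸ hquot.locIdeal I := Ideal.Quotient.mk _
  have hθ : Surjective θ := Ideal.Quotient.mk_surjective
  have hart' : IsArtinianRing (Q ⧸ hquot.locIdeal I) := hθ.isArtinianRing
  have hker : RingHom.ker ρ ≤ RingHom.ker (θ.comp φ) := fun r hr =>
    Ideal.Quotient.eq_zero_iff_mem.2 ((hmem r).2 hr)
  let ψ := ρ.liftOfSurjective hρsurj ⟨θ.comp φ, hker⟩
  have comm : θ.comp φ = ψ.comp ρ := (ρ.liftOfRightInverse_comp _ _ ⟨θ.comp φ, hker⟩).symm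
  have hψ : Injective ψ := by
    refine (injective_iff_map_eq_zero ψ).2 fun x hx => ?_
    obtain ⟨r, rfl⟩ := hρsurj x
    exact (hmem r).1 (Ideal.Quotient.eq_zero_iff_mem.1 ((RingHom.congr_fun comm r).trans hx))
  let e : LeftQuotData R' := ⟨_, ψ, hquot.of_surjective hθ hψ comm⟩
  refine ⟨⟨_, hJ2, hquot.coe_locIdeal I⟩, ⟨e, hart'⟩, e, hart', θ, hθ, ?_, comm⟩
  rw [← hquot.coe_locIdeal I]
  exact congrArg _ Ideal.mk_ker
end

section
/- Let R be a ring with a left Artinian left quotient ring Q = C⁻¹R. If I is a (two-sided) ideal of R, then C⁻¹I is a (two-sided) ideal of Q and (C⁻¹I)^i = C⁻¹(I^i) for all i ≥ 1. -/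
open Function

universe u v

/-- The left ideal generated by the image of `K` is `C⁻¹K`. -/
theorem IsLeftQuotRing.coe_map {R : Type u} [Ring R] {Q : Type v} [Ring Q] {φ : R →+* Q}
    (h : IsLeftQuotRing φ) (K : Ideal R) : (↑(K.map φ) : Set Q) = locSet φ K := by
  ext q
  constructor
  · intro hq
    refine Submodule.span_induction (p := fun q _ => q ∈ locSet φ K) ?_ ?_ ?_ ?_ hq
    · rintro _ ⟨a, ha, rfl⟩
      exact ⟨1, a, by simp [IsRegElem], ha, by simp⟩
    · exact ⟨1, 0, by simp [IsRegElem], K.zero_mem, by simp⟩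
    · rintro x y - - ⟨c, a, hc, ha, hca⟩ ⟨d, b, hd, hb, hdb⟩
      obtain ⟨u, hu⟩ := h.isUnit d hd
      obtain ⟨e, r, he, her⟩ := h.denom (φ c * ↑u⁻¹)
      have hec : φ (e * c) = φ (r * d) := by
        rw [map_mul, map_mul, ← her, ← hu]; simp [mul_assoc]
      refine ⟨e * c, e * a + r * b, ⟨fun z hz => ?_, fun z hz => ?_⟩,
        K.add_mem (K.mul_mem_left _ ha) (K.mul_mem_left _ hb), ?_⟩
      · exact hc.1 _ (he.1 _ (by rwa [← mul_assoc]))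
      · exact he.2 _ (hc.2 _ (by rwa [mul_assoc]))
      · rw [mul_add, map_add]
        congr 1
        · rw [map_mul, mul_assoc, hca, map_mul]
        · rw [hec, map_mul, mul_assoc, hdb, map_mul]
    · rintro p x - ⟨c, a, hc, ha, hca⟩
      obtain ⟨u, hu⟩ := h.isUnit c hc
      obtain ⟨e, r, he, her⟩ := h.denom (p * ↑u⁻¹)
      refine ⟨e, r * a, he, K.mul_mem_left _ ha, ?_⟩
      rw [map_mul, ← her, ← hca, ← hu]
      simp [mul_assoc]
  · rintro ⟨c, a, hc, ha, hca⟩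
    obtain ⟨u, hu⟩ := h.isUnit c hc
    have : q = ↑u⁻¹ * φ a := by rw [← hca, ← hu]; simp
    rw [this]
    exact Ideal.mul_mem_left _ _ (Ideal.mem_map_of_mem φ ha)

/-- In a left Artinian ring, a left ideal stable under right multiplication by a unit is also
stable under right multiplication by its inverse. -/
theorem IsArtinianRing.mul_units_inv_mem {Q : Type v} [Ring Q] [IsArtinianRing Q] (J : Ideal Q)
    (u : Qˣ) (hu : ∀ x ∈ J, x * (u : Q) ∈ J) {x : Q} (hx : x ∈ J) : x * ↑u⁻¹ ∈ J := by
  let f : ℕ →o (Ideal Q)ᵒᵈ :=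
    { toFun n := OrderDual.toDual (Submodule.comap (LinearMap.toSpanSingleton Q Q ↑(u ^ n)⁻¹) J)
      monotone' := monotone_nat_of_le_succ fun n => by
        intro y hy
        have hy' : y * ↑(u ^ (n + 1))⁻¹ ∈ J := hy
        change y * ↑(u ^ n)⁻¹ ∈ J
        have := hu _ hy'
        rwa [mul_assoc, ← Units.val_mul, show (u ^ (n + 1))⁻¹ * u = (u ^ n)⁻¹ by
          rw [pow_succ']; group] at this }
  obtain ⟨n, hn⟩ := IsArtinian.monotone_stabilizes f
  have hmem : x * ↑(u ^ n) ∈ OrderDual.ofDual (f n) := by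
    change x * ↑(u ^ n) * ↑(u ^ n)⁻¹ ∈ J
    rwa [Units.mul_inv_cancel_right]
  rw [hn (n + 1) n.le_succ] at hmem
  have : x * ↑(u ^ n) * ↑(u ^ (n + 1))⁻¹ ∈ J := hmem
  rwa [mul_assoc, ← Units.val_mul, show u ^ n * (u ^ (n + 1))⁻¹ = u⁻¹ by
    rw [pow_succ']; group] at this

/-- If `Q` is left Artinian, the left ideal `C⁻¹I` is two-sided for every two-sided `I`. -/
theorem IsLeftQuotRing.isTwoSidedNC_map {R : Type u} [Ring R] {Q : Type v} [Ring Q] {φ : R →+* Q}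
    (h : IsLeftQuotRing φ) [IsArtinianRing Q] {I : Ideal R} (hI : I.IsTwoSidedNC) :
    (I.map φ).IsTwoSidedNC := by
  have hφ : ∀ r : R, ∀ x ∈ I.map φ, x * φ r ∈ I.map φ := by
    intro r x hx
    refine Submodule.span_induction (p := fun x _ => x * φ r ∈ I.map φ) ?_ ?_ ?_ ?_ hx
    · rintro _ ⟨a, ha, rfl⟩
      rw [← map_mul]
      exact Ideal.mem_map_of_mem φ (hI a ha r)
    · simp
    · intro x y _ _ hx hy
      rw [add_mul]
      exact add_mem hx hy
    · intro p x _ hx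
      rw [smul_eq_mul, mul_assoc]
      exact Ideal.mul_mem_left _ _ hx
  intro x hx q
  obtain ⟨c, r, hc, hcr⟩ := h.denom q
  obtain ⟨u, hu⟩ := h.isUnit c hc
  have hq : q = ↑u⁻¹ * φ r := by rw [← hcr, ← hu]; simp
  rw [hq, ← mul_assoc]
  exact hφ r _ (IsArtinianRing.mul_units_inv_mem _ u (fun y hy => hu ▸ hφ c y hy) hx)

/-- Extension of left ideals along a ring homomorphism is multiplicative when the extension of
the left factor is two-sided. -/
theorem Ideal.map_mul_of_isTwoSidedNC {R : Type u} [Ring R] {Q : Type v} [Ring Q] (φ : R →+* Q)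
    {I : Ideal R} (hI : (I.map φ).IsTwoSidedNC) (K : Ideal R) :
    (I * K).map φ = I.map φ * K.map φ := by
  apply le_antisymm
  · rw [Ideal.map_le_iff_le_comap, Ideal.mul_le]
    intro a ha b hb
    rw [Ideal.mem_comap, map_mul]
    exact Ideal.mul_mem_mul (Ideal.mem_map_of_mem φ ha) (Ideal.mem_map_of_mem φ hb)
  · rw [Ideal.mul_le]
    intro x hx y hy
    refine Submodule.span_induction
      (p := fun y _ => ∀ x ∈ I.map φ, x * y ∈ (I * K).map φ) ?_ ?_ ?_ ?_ hy x hx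
    · rintro _ ⟨b, hb, rfl⟩ x hx
      refine Submodule.span_induction (p := fun x _ => x * φ b ∈ (I * K).map φ) ?_ ?_ ?_ ?_ hx
      · rintro _ ⟨a, ha, rfl⟩
        rw [← map_mul]
        exact Ideal.mem_map_of_mem φ (Ideal.mul_mem_mul ha hb)
      · simp
      · intro x y _ _ hx hy
        rw [add_mul]
        exact add_mem hx hy
      · intro p x _ hx
        rw [smul_eq_mul, mul_assoc]
        exact Ideal.mul_mem_left _ _ hx
    · simp
    · intro y z _ _ hy hz x hx
      rw [mul_add]
      exact add_mem (hy x hx) (hz x hx)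
    · intro p y _ hy x hx
      rw [smul_eq_mul, ← mul_assoc]
      exact hy _ (hI x hx p)

/-- **Proposition (`b13Sep12`.(1)).** Let `R` be a ring with a left Artinian left quotient
ring `Q = C⁻¹R` (realized by `φ : R → Q`).  If `I` is a (two-sided) ideal of `R` then
`C⁻¹I` is a (two-sided) ideal of `Q` and `(C⁻¹I)^i = C⁻¹(I^i)` for all `i ≥ 1`. -/
theorem localization_of_ideal_powers
    {R : Type u} [Ring R] {Q : Type v} [Ring Q] (φ : R →+* Q)
    (hquot : IsLeftQuotRing φ) (hart : IsArtinianRing Q)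
    (I : Ideal R) (hI2 : I.IsTwoSidedNC) :
    ∃ J : Ideal Q, J.IsTwoSidedNC ∧ (↑J : Set Q) = locSet φ I ∧
      ∀ i : ℕ, 1 ≤ i → (↑(J ^ i) : Set Q) = locSet φ (I ^ i) := by
  have hJ := hquot.isTwoSidedNC_map hI2
  refine ⟨I.map φ, hJ, hquot.coe_map I, fun i hi => ?_⟩
  rw [← hquot.coe_map]
  congr 1
  induction i, hi using Nat.le_induction with
  | base => rw [Submodule.pow_one, Submodule.pow_one]
  | succ n hn ih =>
    have hn0 : n ≠ 0 := Nat.one_le_iff_ne_zero.mp hn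
    rw [Submodule.pow_succ' _ hn0, Submodule.pow_succ' _ hn0, ih,
      Ideal.map_mul_of_isTwoSidedNC φ hJ]
end

section
/- Let R be a ring with a left Artinian left quotient ring Q = C⁻¹R, and let r be the (Jacobson = prime) radical of Q. Then the map Q/r → Q̄ = C̄⁻¹R̄, c⁻¹r' + r ↦ c̄⁻¹r̄', is a well-defined ring isomorphism with inverse c̄⁻¹r̄' ↦ c⁻¹r' + r; in particular the left quotient ring Q̄ of R̄ exists and is semisimple. -/
open Function

universe u v

section Auxiliary

/-- A right non-zero-divisor acts surjectively by right multiplication on every left ideal of a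
left Artinian ring that it stabilizes. -/
lemma Ideal.exists_mul_eq_of_isArtinianRing {Q : Type*} [Ring Q] [IsArtinianRing Q] {K : Ideal Q}
    {c : Q} (hc : ∀ x : Q, x * c = 0 → x = 0) (hK : ∀ x ∈ K, x * c ∈ K) {x : Q} (hx : x ∈ K) :
    ∃ y ∈ K, y * c = x := by
  let f : K →ₗ[Q] K := (LinearMap.toSpanSingleton Q Q c).restrict hK
  have hf : Function.Injective f := by
    refine (injective_iff_map_eq_zero f).2 fun y hy => Subtype.ext (hc y ?_)
    exact congrArg Subtype.val hy
  obtain ⟨y, hy⟩ := IsArtinian.surjective_of_injective_endomorphism f hf ⟨x, hx⟩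
  exact ⟨y, y.2, congrArg Subtype.val hy⟩

/-- In a left Artinian ring every right non-zero-divisor is a unit. -/
lemma isUnit_of_isArtinianRing {Q : Type*} [Ring Q] [IsArtinianRing Q] {c : Q}
    (hc : ∀ x : Q, x * c = 0 → x = 0) : IsUnit c := by
  obtain ⟨d, -, hd⟩ := Ideal.exists_mul_eq_of_isArtinianRing (K := ⊤) hc
    (fun _ _ => Submodule.mem_top) (Submodule.mem_top (x := (1 : Q)))
  have hcd : c * d = 1 := by
    refine sub_eq_zero.1 (hc _ ?_)
    rw [sub_mul, mul_assoc, hd, mul_one, one_mul, sub_self]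
  exact ⟨⟨c, d, hcd, hd⟩, rfl⟩

/-- The preimage of a nilpotent ideal is contained in every prime ideal. -/
lemma Ideal.IsPrimeNC.comap_le_of_isNilpotent {R Q : Type*} [Ring R] [Ring Q] {P : Ideal R}
    (hP : P.IsPrimeNC) (f : R →+* Q) (hf : RingHom.ker f ≤ P) {I : Ideal Q}
    (hI : IsNilpotent I) : I.comap f ≤ P := by
  intro a ha
  by_contra haP
  have key : ∀ k : ℕ, ∃ b : R, f b ∈ I ^ k ∧ b ∉ P := by
    intro k
    induction k with
    | zero =>
      exact ⟨1, by simp [Submodule.pow_zero], fun h => hP.1 ((Ideal.eq_top_iff_one P).2 h)⟩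
    | succ k ih =>
      obtain ⟨b, hb, hbP⟩ := ih
      have : ∃ r : R, b * r * a ∉ P := by
        by_contra! h
        exact (hP.2.2 b a h).elim hbP haP
      obtain ⟨r, hr⟩ := this
      refine ⟨b * r * a, ?_, hr⟩
      rw [mul_assoc, map_mul, map_mul, Submodule.pow_succ]
      exact Ideal.mul_mem_mul hb (I.mul_mem_left _ ha)
  obtain ⟨k, hk⟩ := hI
  obtain ⟨b, hb, hbP⟩ := key k
  rw [hk] at hb
  exact hbP (hf hb)

lemma primeRadical_le_jacobson_s19 (Q : Type*) [Ring Q] : primeRadical Q ≤ Ring.jacobson Q := by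
  rw [Ring.jacobson_eq_sInf_isMaximal]
  refine le_sInf fun m (hm : m.IsMaximal) => ?_
  let P : Ideal Q :=
    { carrier := {a | ∀ s : Q, a * s ∈ m}
      add_mem' := fun ha hb s => by rw [add_mul]; exact m.add_mem (ha s) (hb s)
      zero_mem' := fun s => by rw [zero_mul]; exact m.zero_mem
      smul_mem' := fun q a ha s => by
        rw [smul_eq_mul, mul_assoc]; exact m.mul_mem_left _ (ha s) }
  have hP : P.IsPrimeNC := by
    refine ⟨fun h => ?_, fun a ha r s => ?_, fun a b hab => ?_⟩
    · have h1 : (1 : Q) ∈ P := h ▸ Submodule.mem_top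
      exact hm.ne_top ((Ideal.eq_top_iff_one m).2 (by simpa using h1 1))
    · rw [mul_assoc]; exact ha _
    · by_contra! h
      obtain ⟨t, ht⟩ : ∃ t, b * t ∉ m := by
        by_contra! hb
        exact h.2 hb
      refine h.1 fun s => ?_
      obtain ⟨y, z, hz, hyz⟩ := hm.exists_inv ht
      have hs : a * s = a * (s * y) * b * t + a * s * z := by
        calc
          a * s = a * s * (y * (b * t) + z) := by rw [hyz, mul_one]
          _ = _ := by simp only [mul_add, mul_assoc]
      rw [hs]
      exact m.add_mem (hab (s * y) t) (m.mul_mem_left _ hz)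
  intro x hx
  have hxP : x ∈ P := (sInf_le (a := P) hP) hx
  simpa using hxP 1

lemma primeRadical_eq_jacobson (Q : Type*) [Ring Q] [IsArtinianRing Q] :
    primeRadical Q = Ring.jacobson Q := by
  refine le_antisymm (primeRadical_le_jacobson_s19 Q) (le_sInf fun P hP => ?_)
  refine Ideal.IsPrimeNC.comap_le_of_isNilpotent hP (RingHom.id Q) ?_
    (IsSemiprimaryRing.isNilpotent (R := Q))
  exact fun x hx => (show x = 0 from hx) ▸ P.zero_mem

/-- Prime ideals of a left Artinian left quotient ring contract to prime ideals. -/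
lemma Ideal.IsPrimeNC.comap {R : Type u} {Q : Type v} [Ring R] [Ring Q] [IsArtinianRing Q]
    {φ : R →+* Q} (hφ : IsLeftQuotRing φ) {P : Ideal Q} (hP : P.IsPrimeNC) :
    (P.comap φ).IsPrimeNC := by
  refine ⟨fun h => ?_, fun a ha r => ?_, fun a b hab => ?_⟩
  · have h1 : (1 : R) ∈ P.comap φ := h ▸ Submodule.mem_top
    exact hP.1 ((Ideal.eq_top_iff_one P).2 (by simpa using h1))
  · rw [Ideal.mem_comap, map_mul]
    exact hP.2.1 _ ha _
  refine hP.2.2 (φ a) (φ b) fun q => ?_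
  let K : Ideal Q := Ideal.span (Set.range fun r => φ (a * r))
  have hK : ∀ s : R, ∀ x ∈ K, x * φ s ∈ K := by
    intro s x hx
    have hle : K ≤ Submodule.comap (LinearMap.toSpanSingleton Q Q (φ s)) K := by
      refine Ideal.span_le.2 ?_
      rintro _ ⟨r, rfl⟩
      refine Ideal.subset_span ⟨r * s, ?_⟩
      simp [mul_assoc]
    exact hle hx
  have hKP : ∀ x ∈ K, x * φ b ∈ P := by
    intro x hx
    have hle : K ≤ Submodule.comap (LinearMap.toSpanSingleton Q Q (φ b)) P := by
      refine Ideal.span_le.2 ?_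
      rintro _ ⟨r, rfl⟩
      have := hab r
      simpa using this
    exact hle hx
  obtain ⟨c, r, hc, hcr⟩ := hφ.denom q
  have haK : φ a ∈ K := Ideal.subset_span ⟨1, by simp⟩
  obtain ⟨y, hy, hya⟩ := Ideal.exists_mul_eq_of_isArtinianRing
    (fun x hx => ((hφ.isUnit c hc).mul_left_eq_zero).1 hx) (hK c) haK
  rw [← hya, mul_assoc y, hcr]
  exact hKP _ (hK r y hy)

lemma IsLeftQuotRing.comap_primeRadical {R : Type u} {Q : Type v} [Ring R] [Ring Q]
    [IsArtinianRing Q] {φ : R →+* Q} (hφ : IsLeftQuotRing φ) :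
    (primeRadical Q).comap φ = primeRadical R := by
  refine le_antisymm (le_sInf fun P hP => ?_) fun x hx => ?_
  · rw [primeRadical_eq_jacobson]
    refine Ideal.IsPrimeNC.comap_le_of_isNilpotent hP φ ?_
      (IsSemiprimaryRing.isNilpotent (R := Q))
    rw [(RingHom.injective_iff_ker_eq_bot φ).1 hφ.inj]
    exact bot_le
  · refine Ideal.mem_comap.2 (Submodule.mem_sInf.2 fun P hP => ?_)
    exact Submodule.mem_sInf.1 hx _ (Ideal.IsPrimeNC.comap hφ hP)

/-- A subring of a left Artinian ring whose left fractions fill the whole ring has it as its left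
quotient ring. -/
lemma isLeftQuotRing_of_isArtinianRing {R : Type u} {Q : Type v} [Ring R] [Ring Q]
    [IsArtinianRing Q] {ψ : R →+* Q} (hinj : Function.Injective ψ)
    (hfrac : ∀ q : Q, ∃ c r : R, IsUnit (ψ c) ∧ ψ c * q = ψ r) : IsLeftQuotRing ψ where
  inj := hinj
  isUnit c hc := by
    refine isUnit_of_isArtinianRing fun x hx => ?_
    obtain ⟨s, r, hs, hsr⟩ := hfrac x
    have hr : r = 0 := hc.2 r <| hinj <| by
      rw [map_mul, ← hsr, mul_assoc, hx, mul_zero, map_zero]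
    rw [hr, map_zero] at hsr
    exact hs.mul_right_eq_zero.1 hsr
  denom q := by
    obtain ⟨c, r, hc, hcr⟩ := hfrac q
    refine ⟨c, r, ⟨fun x hx => hinj ?_, fun x hx => hinj ?_⟩, hcr⟩
    · rw [map_zero]
      exact hc.mul_right_eq_zero.1 (by rw [← map_mul, hx, map_zero])
    · rw [map_zero]
      exact hc.mul_left_eq_zero.1 (by rw [← map_mul, hx, map_zero])

lemma IsLeftQuotRing.small {R : Type u} {Q : Type v} [Ring R] [Ring Q] {ψ : R →+* Q}
    (hψ : IsLeftQuotRing ψ) : Small.{u} Q := by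
  refine small_of_surjective (f := fun p : R × R => Ring.inverse (ψ p.1) * ψ p.2) fun q => ?_
  obtain ⟨c, r, hc, hcr⟩ := hψ.denom q
  exact ⟨(c, r), by simp [← hcr, Ring.inverse_mul_cancel_left _ _ (hψ.isUnit c hc)]⟩

lemma IsLeftQuotRing.ringEquiv_comp {R : Type u} {Q : Type v} {Q' : Type*} [Ring R] [Ring Q]
    [Ring Q'] {ψ : R →+* Q} (hψ : IsLeftQuotRing ψ) (e : Q ≃+* Q') :
    IsLeftQuotRing ((e : Q →+* Q').comp ψ) where
  inj := e.injective.comp hψ.inj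
  isUnit c hc := (hψ.isUnit c hc).map (e : Q →+* Q')
  denom q := by
    obtain ⟨c, r, hc, hcr⟩ := hψ.denom (e.symm q)
    exact ⟨c, r, hc, by simp [← hcr]⟩

end Auxiliary

/-- **Proposition (`b13Sep12`.(6)).** Let `R` be a ring with a left Artinian left quotient
ring `Q = C⁻¹R` (realized by `φ : R → Q`), `n` its prime radical, `R̄ = R/n` (realized by a
surjective `π` with kernel `n`), and let `r = primeRadical Q` be the (Jacobson = prime)
radical of `Q`.  Then the left quotient ring `Q̄ = C̄⁻¹R̄` of `R̄` exists and is semisimple,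
and the map `Q/r → Q̄`, `c⁻¹r' + r ↦ c̄⁻¹r̄'`, is a well-defined ring isomorphism (encoded
by a surjective ring homomorphism `θ : Q → Q̄` with kernel `r` such that `θ ∘ φ = ψ ∘ π`,
where `ψ : R̄ → Q̄` is the canonical embedding). -/
theorem quotient_by_radical_is_quotient_ring_of_factor
    {R : Type u} [Ring R] {Q : Type v} [Ring Q] (φ : R →+* Q)
    (hquot : IsLeftQuotRing φ) (hart : IsArtinianRing Q)
    {Rbar : Type w} [Ring Rbar] (π : R →+* Rbar)
    (hπsurj : Function.Surjective π) (hπker : RingHom.ker π = primeRadical R) :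
    ∃ e : LeftQuotData Rbar, IsSemisimpleRing e.Q ∧
      ∃ θ : Q →+* e.Q, Function.Surjective θ ∧
        RingHom.ker θ = primeRadical Q ∧ θ.comp φ = e.φ.comp π := by
  have hJ := primeRadical_eq_jacobson Q
  let g : R →+* Q ⧸ Ring.jacobson Q := (Ideal.Quotient.mk _).comp φ
  have hg : RingHom.ker g = RingHom.ker π := by
    rw [hπker, ← hquot.comap_primeRadical, hJ]
    ext x
    exact Ideal.Quotient.eq_zero_iff_mem
  let ψ : Rbar →+* Q ⧸ Ring.jacobson Q := π.liftOfSurjective hπsurj ⟨g, hg.ge⟩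
  have hψ : ∀ x, ψ (π x) = g x := fun x =>
    π.liftOfRightInverse_comp_apply _ _ ⟨g, hg.ge⟩ x
  have : IsArtinianRing (Q ⧸ Ring.jacobson Q) :=
    (Ideal.Quotient.mk_surjective (I := Ring.jacobson Q)).isArtinianRing
  have hψq : IsLeftQuotRing ψ := by
    refine isLeftQuotRing_of_isArtinianRing ?_ fun q => ?_
    · refine (injective_iff_map_eq_zero ψ).2 fun y hy => ?_
      obtain ⟨x, rfl⟩ := hπsurj y
      exact hg.le (show g x = 0 from (hψ x).symm.trans hy)
    · obtain ⟨q, rfl⟩ := Ideal.Quotient.mk_surjective q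
      obtain ⟨c, r, hc, hcr⟩ := hquot.denom q
      refine ⟨π c, π r, ?_, ?_⟩
      · rw [hψ]
        exact (hquot.isUnit c hc).map (Ideal.Quotient.mk (Ring.jacobson Q))
      · rw [hψ, hψ]
        exact (map_mul (Ideal.Quotient.mk (Ring.jacobson Q)) _ _).symm.trans (congrArg _ hcr)
  have : Small.{w} (Q ⧸ Ring.jacobson Q) := hψq.small
  let e : Q ⧸ Ring.jacobson Q ≃+* Shrink.{w} (Q ⧸ Ring.jacobson Q) :=
    (Shrink.ringEquiv (Q ⧸ Ring.jacobson Q)).symm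
  refine ⟨⟨_, _, hψq.ringEquiv_comp e⟩, e.isSemisimpleRing,
    (e : (Q ⧸ Ring.jacobson Q) →+* Shrink.{w} (Q ⧸ Ring.jacobson Q)).comp
      (Ideal.Quotient.mk _), ?_, ?_, ?_⟩
  · exact e.surjective.comp Ideal.Quotient.mk_surjective
  · rw [hJ]
    ext x
    rw [RingHom.mem_ker, RingHom.comp_apply, RingHom.coe_coe, map_eq_zero_iff e e.injective,
      Ideal.Quotient.eq_zero_iff_mem]
  · exact RingHom.ext fun x => congrArg e (hψ x).symm
end
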